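/- Let ν be a lattice path. The ν-Tamari lattice Tam(ν) is order-isomorphic to the increasing flip poset of the subword complex SC(Q_ν, π_ν). -/

import Mathlib

open scoped Classical

/-! Lattice paths: `true` = north step, `false` = east step. -/

def eastSteps (ν : List Bool) : ℕ := ν.count false
def northSteps (ν : List Bool) : ℕ := ν.count true

/-- Height at which the path first reaches abscissa `x`. -/
def heightAt : List Bool → ℕ → ℕ
  | _, 0 => 0
  | [], _ + 1 => 0
  | true :: rest, x + 1 => heightAt rest (x + 1) + 1
  | false :: rest, x + 1 => heightAt rest x

/-- Lattice point of a path after `i` steps. -/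
def pointAt (μ : List Bool) (i : ℕ) : ℕ × ℕ :=
  ((μ.take i).count false, (μ.take i).count true)

/-- The set `A_ν` of lattice points weakly above `ν`. -/
def APts (ν : List Bool) : Set (ℕ × ℕ) :=
  {p | p.1 ≤ eastSteps ν ∧ heightAt ν p.1 ≤ p.2 ∧ p.2 ≤ northSteps ν}

def Incompatible (ν : List Bool) (p q : ℕ × ℕ) : Prop :=
  (p.1 < q.1 ∧ p.2 < q.2 ∧ (q.1, p.2) ∈ APts ν) ∨
    (q.1 < p.1 ∧ q.2 < p.2 ∧ (p.1, q.2) ∈ APts ν)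

def Compatible (ν : List Bool) (p q : ℕ × ℕ) : Prop := ¬ Incompatible ν p q

def IsNuTree (ν : List Bool) (T : Set (ℕ × ℕ)) : Prop :=
  T ⊆ APts ν ∧ T.Pairwise (Compatible ν) ∧
    ∀ T', T' ⊆ APts ν → T'.Pairwise (Compatible ν) → T ⊆ T' → T' = T

def IsRightRotationAt (T T' : Set (ℕ × ℕ)) (q q' : ℕ × ℕ) : Prop :=
  ∃ x y x'' y', q = (x, y) ∧ q' = (x'', y') ∧ x < x'' ∧ y < y' ∧
    (x, y) ∈ T ∧ (x, y') ∈ T ∧ (x'', y) ∈ T ∧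
    (∀ b, y < b → b < y' → (x, b) ∉ T) ∧
    (∀ a, x < a → a < x'' → (a, y) ∉ T) ∧
    (∀ a, x < a → a < x'' → (a, y') ∉ T) ∧
    (∀ b, y < b → b < y' → (x'', b) ∉ T) ∧
    T' = (T \ {(x, y)}) ∪ {(x'', y')}

def IsRightRotation (T T' : Set (ℕ × ℕ)) : Prop :=
  ∃ q q', IsRightRotationAt T T' q q'

/-- Order relation of the rotation poset of ν-trees. -/
def TreeLE (ν : List Bool) : Set (ℕ × ℕ) → Set (ℕ × ℕ) → Prop :=
  Relation.ReflTransGen fun A B => IsNuTree ν A ∧ IsNuTree ν B ∧ IsRightRotation A B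

def IsNuPath (ν μ : List Bool) : Prop :=
  eastSteps μ = eastSteps ν ∧ northSteps μ = northSteps ν ∧
    ∀ i ≤ μ.length, pointAt μ i ∈ APts ν

noncomputable def horiz (ν : List Bool) (p : ℕ × ℕ) : ℕ :=
  sSup {k | (p.1 + k, p.2) ∈ APts ν}

/-- Covering relation of the ν-Tamari lattice. -/
def TamariCover (ν μ μ' : List Bool) : Prop :=
  IsNuPath ν μ ∧ IsNuPath ν μ' ∧
    ∃ i j, 0 < i ∧ i < j ∧ j ≤ μ.length ∧
      μ.getD (i - 1) true = false ∧ μ.getD i false = true ∧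
      horiz ν (pointAt μ j) = horiz ν (pointAt μ i) ∧
      (∀ k, i < k → k < j → horiz ν (pointAt μ k) ≠ horiz ν (pointAt μ i)) ∧
      μ' = μ.take (i - 1) ++ (μ.drop i).take (j - i) ++ [false] ++ μ.drop j

def TamariLE (ν : List Bool) : List Bool → List Bool → Prop :=
  Relation.ReflTransGen (TamariCover ν)

/-! Flushing maps -/

def rowAvail (ν : List Bool) (y : ℕ) : List ℕ :=
  ((List.range (eastSteps ν + 1)).filter fun x => decide (heightAt ν x ≤ y)).reverse

def pointsAtHeight (μ : List Bool) (y : ℕ) : ℕ :=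
  ((List.range (μ.length + 1)).filter fun i => decide ((μ.take i).count true = y)).length

def rflushAux (ν : List Bool) : List ℕ → ℕ → List ℕ → List (ℕ × ℕ)
  | [], _, _ => []
  | c :: rest, y, forbidden =>
    let placed := ((rowAvail ν y).filter fun x => decide (x ∉ forbidden)).take c
    placed.map (fun x => (x, y)) ++ rflushAux ν rest (y + 1) (forbidden ++ placed.dropLast)

/-- Right-flushing map `R`. -/
def Rflush (ν μ : List Bool) : Set (ℕ × ℕ) :=
  {p | p ∈ rflushAux ν ((List.range (northSteps ν + 1)).map (pointsAtHeight μ)) 0 []}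

def lflushAux (m : ℕ) : List ℕ → ℕ → List ℕ → List (ℕ × ℕ)
  | [], _, _ => []
  | c :: rest, y, forbidden =>
    let placed := ((List.range (m + 1)).filter fun x => decide (x ∉ forbidden)).take c
    placed.map (fun x => (x, y)) ++ lflushAux m rest (y + 1) (forbidden ++ placed.dropLast)

noncomputable def rowCount (T : Set (ℕ × ℕ)) (y : ℕ) : ℕ := {x | (x, y) ∈ T}.ncard

/-- Left-flushing map `L`. -/
noncomputable def Lflush (ν : List Bool) (T : Set (ℕ × ℕ)) : Set (ℕ × ℕ) :=
  {p | p ∈ lflushAux (eastSteps ν) ((List.range (northSteps ν + 1)).map (rowCount T)) 0 []}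

def pathPointSet (μ : List Bool) : Set (ℕ × ℕ) := {p | ∃ i ≤ μ.length, pointAt μ i = p}

/-! Bracket vectors (0-indexed positions `0,…,ℓ`). -/

noncomputable def fpos (ν : List Bool) (k : ℕ) : ℕ :=
  sSup {i | i ≤ ν.length ∧ (ν.take i).count true = k}

def bmin (ν : List Bool) : List ℕ :=
  (List.range (ν.length + 1)).map fun i => (ν.take i).count true

def IsBracketVector (ν : List Bool) (b : List ℕ) : Prop :=
  b.length = ν.length + 1 ∧
    (∀ k ≤ northSteps ν, b.getD (fpos ν k) 0 = k) ∧
    (∀ i < b.length, (bmin ν).getD i 0 ≤ b.getD i 0 ∧ b.getD i 0 ≤ northSteps ν) ∧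
    ∀ i j k, i < j → j < k → k < b.length →
      ¬(b.getD i 0 = b.getD k 0 ∧ b.getD i 0 < b.getD j 0)

noncomputable def leftChild (T : Set (ℕ × ℕ)) (p : ℕ × ℕ) : Option (ℕ × ℕ) :=
  if ∃ b, (p.1, b) ∈ T ∧ b < p.2 then some (p.1, sSup {b | (p.1, b) ∈ T ∧ b < p.2})
  else none

noncomputable def rightChild (T : Set (ℕ × ℕ)) (p : ℕ × ℕ) : Option (ℕ × ℕ) :=
  if ∃ a, (a, p.2) ∈ T ∧ p.1 < a then
    if ∃ b, (sInf {a | (a, p.2) ∈ T ∧ p.1 < a}, b) ∈ T ∧ p.2 < b then none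
    else some (sInf {a | (a, p.2) ∈ T ∧ p.1 < a}, p.2)
  else none

noncomputable def inorderAux (T : Set (ℕ × ℕ)) : ℕ → ℕ × ℕ → List (ℕ × ℕ)
  | 0, _ => []
  | fuel + 1, p =>
    (match leftChild T p with
      | none => []
      | some l => inorderAux T fuel l) ++ p ::
      (match rightChild T p with
        | none => []
        | some r => inorderAux T fuel r)

/-- Bracket vector of a ν-tree: y-coordinates read in in-order from the root `(0,n)`. -/
noncomputable def bracketOfTree (ν : List Bool) (T : Set (ℕ × ℕ)) : List ℕ :=
  (inorderAux T T.ncard (0, northSteps ν)).map Prod.snd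

noncomputable def bracketAssign (ν μ : List Bool) : List (ℕ × ℕ) :=
  ((List.range (northSteps ν + 1)).foldl
    (fun (st : List (ℕ × ℕ) × List ℕ) k =>
      let picked := ((st.2.filter fun i => decide (i ≤ fpos ν k)).reverse).take
        (pointsAtHeight μ k)
      (st.1 ++ picked.map fun i => (i, k), st.2.filter fun i => decide (i ∉ picked)))
    ([], List.range (ν.length + 1))).1

/-- Bracket vector of a ν-path. -/
noncomputable def bracketOfPath (ν μ : List Bool) : List ℕ :=
  (List.range (ν.length + 1)).map fun i => ((bracketAssign ν μ).lookup i).getD 0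

/-- Componentwise order on (equal length) integer vectors. -/
def listLE (b b' : List ℕ) : Prop :=
  b.length = b'.length ∧ ∀ i, b.getD i 0 ≤ b'.getD i 0

/-! Reversal -/

def revPath (ν : List Bool) : List Bool := ν.reverse.map fun s => !s

def revTree (ν : List Bool) (T : Set (ℕ × ℕ)) : Set (ℕ × ℕ) :=
  (fun p : ℕ × ℕ => (northSteps ν - p.2, eastSteps ν - p.1)) '' T

/-! Pipe dreams and subword complexes -/

def dOf (ν : List Bool) (p : ℕ × ℕ) : ℕ := p.1 + (northSteps ν - p.2)

def labelPerm (ν : List Bool) (p : ℕ × ℕ) : Equiv.Perm ℕ :=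
  Equiv.swap (dOf ν p + 1) (dOf ν p + 2)

/-- The points of `A_ν` in reading order: rows from bottom to top, each left to right. -/
def readingList (ν : List Bool) : List (ℕ × ℕ) :=
  ((List.range (northSteps ν + 1)).map fun y =>
    ((List.range (eastSteps ν + 1)).filter fun x => decide (heightAt ν x ≤ y)).map
      fun x => (x, y)).flatten

/-- The minimal ν-tree. -/
def TminSet (ν : List Bool) : Set (ℕ × ℕ) :=
  {p | p ∈ APts ν ∧ (p.1 = 0 ∨ ∃ i < ν.length, ν.getD i true = false ∧ p = pointAt ν (i + 1))}

noncomputable def prodOver (ν : List Bool) (C : Set (ℕ × ℕ)) : Equiv.Perm ℕ :=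
  (((readingList ν).filter fun p => decide (p ∈ C)).map (labelPerm ν)).prod

/-- Coxeter length: number of inversions. -/
noncomputable def lenInv (π : Equiv.Perm ℕ) : ℕ :=
  {q : ℕ × ℕ | q.1 < q.2 ∧ π q.2 < π q.1}.ncard

noncomputable def piNu (ν : List Bool) : Equiv.Perm ℕ := prodOver ν (APts ν \ TminSet ν)

def Qword (ν : List Bool) : List (Equiv.Perm ℕ) := (readingList ν).map (labelPerm ν)

noncomputable def prodAt (Q : List (Equiv.Perm ℕ)) (P : Finset ℕ) : Equiv.Perm ℕ :=
  (((List.range Q.length).filter fun i => decide (i ∈ P)).map fun i => Q.getD i 1).prod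

def IsFacet (Q : List (Equiv.Perm ℕ)) (π : Equiv.Perm ℕ) (I : Finset ℕ) : Prop :=
  I ⊆ Finset.range Q.length ∧
    prodAt Q (Finset.range Q.length \ I) = π ∧
    (Finset.range Q.length \ I).card = lenInv π

def IncFlip (Q : List (Equiv.Perm ℕ)) (π : Equiv.Perm ℕ) (I J : Finset ℕ) : Prop :=
  IsFacet Q π I ∧ IsFacet Q π J ∧ ∃ i ∈ I, ∃ j ∈ J, i < j ∧ I.erase i = J.erase j

def FlipLE (Q : List (Equiv.Perm ℕ)) (π : Equiv.Perm ℕ) : Finset ℕ → Finset ℕ → Prop :=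
  Relation.ReflTransGen (IncFlip Q π)

/-- The maximal ν-tree. -/
def TmaxSet (ν : List Bool) : Set (ℕ × ℕ) :=
  {p | (p.1 ≤ eastSteps ν ∧ p.2 = northSteps ν) ∨ ∃ i < ν.length, ν.getD i false = true ∧ p = pointAt ν i}

/-!
A lattice path `ν` is encoded by the right ends `r 0 ≤ r 1 ≤ …` of the rows of `A_ν`. A `ν`-path
becomes a `ν`-tree by sending its point at horizontal distance `H` in row `y` to the `H`-th column
that is still free there; a column closes after it has held a point that is not the leftmost one of
its row. This bijection turns the covering relation of the `ν`-Tamari lattice into the exchange of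
one point of a tree for a point in a higher row.

To identify the trees with the facets, read the complement of a set `T` of cells as a pipe dream
with elbows at `T` and crossings elsewhere. Two incompatible points of `T`, the lower one in row
`y`, force two pipes named at most `n + 1 - y` to leave the shape through its first `r y + 1`
columns, whereas for a tree exactly one such pipe does. Hence the permutation of a tree has at least
the inversions forced by this property. A tree has exactly that many crossings, so these are all the
inversions: the Rothe diagram, and with it the permutation, is the same for all trees. Conversely, a
set with this permutation and with the cardinality of a tree has no incompatible points.
-/

theorem reflTransGen_iff_of_bijOn {α β : Type*} {R : α → α → Prop} {R' : β → β → Prop}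
    {s : Set α} {t : Set β} {f : α → β} (hf : Set.BijOn f s t)
    (hR : ∀ a b, R a b → a ∈ s ∧ b ∈ s) (hR' : ∀ a b, R' a b → a ∈ t ∧ b ∈ t)
    (h : ∀ a ∈ s, ∀ b ∈ s, R' (f a) (f b) ↔ R a b) {a b : α} (ha : a ∈ s) (hb : b ∈ s) :
    Relation.ReflTransGen R a b ↔ Relation.ReflTransGen R' (f a) (f b) := by
  constructor
  · exact Relation.ReflTransGen.lift (p := R') f
      (fun a b hab => (h a (hR a b hab).1 b (hR a b hab).2).2 hab) a b
  · intro hab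
    generalize hc : f b = c at hab
    induction hab generalizing b with
    | refl => rw [hf.injOn hb ha hc]
    | tail _ hdc ih =>
      subst hc
      obtain ⟨d, hd, rfl⟩ := hf.surjOn (hR' _ _ hdc).1
      exact (ih hd rfl).tail ((h d hd b hb).1 hdc)

section Inversions

/-- The inversion set of a permutation, whose cardinality is `lenInv`. -/
def inversions (u : Equiv.Perm ℕ) : Set (ℕ × ℕ) := {q | q.1 < q.2 ∧ u q.2 < u q.1}

/-- The Rothe diagram of a permutation `u`: its inversions, recorded as (position of the larger
value, smaller value). -/
def rotheDiagram (u : Equiv.Perm ℕ) : Set (ℕ × ℕ) := {q | q.2 < u q.1 ∧ q.1 < u.symm q.2}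

theorem inversions_mul_swap_subset (u : Equiv.Perm ℕ) (i : ℕ) :
    inversions (u * Equiv.swap i (i + 1)) ⊆
      insert (i, i + 1)
        (Prod.map (Equiv.swap i (i + 1)) (Equiv.swap i (i + 1)) '' inversions u) := by
  rintro ⟨a, b⟩ ⟨hab, hu⟩
  rcases lt_or_ge (Equiv.swap i (i + 1) a) (Equiv.swap i (i + 1) b) with hlt | hge
  · exact Or.inr ⟨(_, _), ⟨hlt, hu⟩, by simp⟩
  · left
    simp only [Equiv.swap_apply_def] at hge
    simp only [Prod.mk.injEq]
    split_ifs at hge <;> omega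

theorem encard_inversions_prod_le {L : List (Equiv.Perm ℕ)}
    (hL : ∀ s ∈ L, ∃ i, s = Equiv.swap i (i + 1)) : (inversions L.prod).encard ≤ L.length := by
  induction L using List.reverseRecOn with
  | nil =>
    have : inversions 1 = ∅ := Set.eq_empty_of_forall_notMem fun q hq => hq.1.asymm hq.2
    simp [this]
  | append_singleton L s ih =>
    obtain ⟨i, rfl⟩ := hL s (by simp)
    have ih := ih fun s hs => hL s (by simp [hs])
    rw [List.prod_append, List.prod_singleton, List.length_append, List.length_singleton,
      Nat.cast_add, Nat.cast_one]
    calc (inversions (L.prod * Equiv.swap i (i + 1))).encard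
        ≤ _ := Set.encard_le_encard (inversions_mul_swap_subset _ i)
      _ ≤ _ := Set.encard_insert_le _ _
      _ ≤ L.length + 1 := by gcongr; exact (Set.encard_image_le _ _).trans ih

theorem rotheDiagram_eq_image (u : Equiv.Perm ℕ) :
    rotheDiagram u = Prod.map id u '' inversions u := by
  ext ⟨p, v⟩
  constructor
  · rintro ⟨hv, hp⟩
    exact ⟨(p, u.symm v), ⟨hp, by simpa using hv⟩, by simp⟩
  · rintro ⟨⟨a, b⟩, ⟨hab, hu⟩, h⟩
    obtain ⟨rfl, rfl⟩ := Prod.mk.inj h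
    exact ⟨hu, by simpa using hab⟩

theorem encard_rotheDiagram (u : Equiv.Perm ℕ) :
    (rotheDiagram u).encard = (inversions u).encard := by
  rw [rotheDiagram_eq_image]
  exact (Function.injective_id.prodMap u.injective).encard_image _

theorem not_lt_of_rotheDiagram_eq {u u' : Equiv.Perm ℕ} (h : rotheDiagram u = rotheDiagram u')
    {p : ℕ} (hp : ∀ q < p, u q = u' q) : ¬ u p < u' p := by
  intro hlt
  have hmem : (p, u p) ∈ rotheDiagram u' := by
    refine ⟨hlt, lt_of_not_ge fun hle => ?_⟩
    dsimp only at hle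
    rcases hle.lt_or_eq with h | h
    · have := hp _ h
      rw [Equiv.apply_symm_apply] at this
      exact h.ne (u.injective this)
    · exact hlt.ne ((Equiv.symm_apply_eq u').1 h)
  rw [← h] at hmem
  exact lt_irrefl _ hmem.1

theorem rotheDiagram_injective : Function.Injective rotheDiagram := by
  intro u u' h
  refine Equiv.ext fun p => ?_
  induction p using Nat.strong_induction_on with
  | _ p ih =>
    exact le_antisymm (not_lt.1 (not_lt_of_rotheDiagram_eq h.symm fun q hq => (ih q hq).symm))
      (not_lt.1 (not_lt_of_rotheDiagram_eq h ih))

end Inversions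

section Positions

/-- The set of positions at which the elements of `T` stand in the list `L`: this encodes sets of
cells by the sets of positions that make up a subword complex. -/
def positions {α : Type*} [DecidableEq α] (L : List α) (T : Finset α) : Finset ℕ :=
  T.image (L.idxOf ·)

variable {α : Type*} [DecidableEq α] {L : List α} {T : Finset α}

theorem mem_positions_iff (hL : L.Nodup) {i : ℕ} (hi : i < L.length) :
    i ∈ positions L T ↔ L[i] ∈ T := by
  rw [positions, Finset.mem_image]
  constructor
  · rintro ⟨p, hp, rfl⟩
    rwa [List.getElem_idxOf]
  · exact fun h => ⟨L[i], h, hL.idxOf_getElem i hi⟩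

theorem idxOf_mem_positions_iff (hT : ∀ p ∈ T, p ∈ L) {p : α} :
    L.idxOf p ∈ positions L T ↔ p ∈ T := by
  rw [positions, Finset.mem_image]
  constructor
  · rintro ⟨q, hq, h⟩
    rwa [← (List.idxOf_inj (hT q hq)).1 h]
  · exact fun h => ⟨p, h, rfl⟩

theorem positions_subset_range (hT : ∀ p ∈ T, p ∈ L) :
    positions L T ⊆ Finset.range L.length :=
  Finset.image_subset_iff.2 fun p hp => Finset.mem_range.2 (List.idxOf_lt_length_of_mem (hT p hp))

theorem card_positions (hT : ∀ p ∈ T, p ∈ L) : (positions L T).card = T.card :=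
  Finset.card_image_of_injOn fun p hp _ _ h => (List.idxOf_inj (hT p hp)).1 h

theorem positions_erase (hT : ∀ p ∈ T, p ∈ L) {p : α} (hp : p ∈ T) :
    positions L (T.erase p) = (positions L T).erase (L.idxOf p) := by
  simp only [positions]
  rw [Finset.erase_eq, Finset.erase_eq, Finset.image_sdiff_of_injOn, Finset.image_singleton]
  · exact fun q hq _ _ h => (List.idxOf_inj (hT q hq)).1 h
  · exact Finset.singleton_subset_iff.2 hp

theorem bijOn_positions (hL : L.Nodup) :
    Set.BijOn (positions L) {T | ∀ p ∈ T, p ∈ L} {I | I ⊆ Finset.range L.length} := by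
  refine ⟨fun T hT => positions_subset_range hT, fun S hS T hT h => ?_, fun I hI => ?_⟩
  · ext p
    rw [← idxOf_mem_positions_iff hS, ← idxOf_mem_positions_iff hT, h]
  · have hT : ∀ p ∈ L.toFinset.filter (L.idxOf · ∈ I), p ∈ L := fun p hp =>
      List.mem_toFinset.1 (Finset.mem_of_mem_filter p hp)
    refine ⟨_, hT, Finset.ext fun i => ?_⟩
    rcases lt_or_ge i L.length with hi | hi
    · simp [mem_positions_iff hL hi, hL.idxOf_getElem i hi]
    · exact iff_of_false
        (fun h => hi.not_gt (Finset.mem_range.1 (positions_subset_range hT h)))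
        fun h => hi.not_gt (Finset.mem_range.1 (hI h))

theorem length_filter_notMem_add_card (hL : L.Nodup) (hT : ∀ p ∈ T, p ∈ L) :
    (L.filter (· ∉ T)).length + T.card = L.length := by
  have hfilter : (L.filter (· ∈ T)).toFinset = T := by
    ext p
    simpa using hT p
  rw [L.length_eq_length_filter_add (· ∈ T), ← List.toFinset_card_of_nodup (hL.filter (· ∈ T)),
    hfilter, add_comm]
  simp

theorem prodAt_compl_positions (hL : L.Nodup) (T : Finset α) (g : α → Equiv.Perm ℕ) :
    prodAt (L.map g) (Finset.range (L.map g).length \ positions L T) =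
      ((L.filter (· ∉ T)).map g).prod := by
  have hfilter : (List.range L.length).filter
      (· ∈ Finset.range L.length \ positions L T) =
      ((List.finRange L.length).filter (L[·.1] ∉ T)).map (·.1) := by
    rw [← List.map_coe_finRange_eq_range, List.filter_map]
    congr 2
    funext i
    simp [mem_positions_iff hL i.2]
  have hL' : L.filter (· ∉ T) =
      ((List.finRange L.length).filter (L[·.1] ∉ T)).map (L[·.1]) := by
    conv_lhs => rw [← List.map_getElem_finRange L, List.filter_map]
    rfl
  rw [prodAt, List.length_map, hfilter, hL', List.map_map, List.map_map]
  congr 2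
  funext i
  simp

theorem rel_of_idxOf_lt {R : α → α → Prop} (hL : L.Pairwise R) {p q : α} (hp : p ∈ L) (hq : q ∈ L)
    (h : L.idxOf p < L.idxOf q) : R p q := by
  simpa only [List.getElem_idxOf] using List.pairwise_iff_getElem.1 hL _ _
    (List.idxOf_lt_length_of_mem hp) (List.idxOf_lt_length_of_mem hq) h

theorem idxOf_lt_idxOf_of_not_rel {R : α → α → Prop} (hL : L.Pairwise R) {p q : α} (hp : p ∈ L)
    (hq : q ∈ L) (hpq : p ≠ q) (h : ¬ R q p) : L.idxOf p < L.idxOf q := by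
  by_contra! hle
  rcases hle.eq_or_lt with heq | hlt
  · exact hpq ((List.idxOf_inj hq).1 heq).symm
  · exact h (rel_of_idxOf_lt hL hq hp hlt)

end Positions

section Trees

/-- The columns of the points of `T` in row `y`. -/
def rowOf (T : Finset (ℕ × ℕ)) (y : ℕ) : Finset ℕ := (T.filter fun p => p.2 = y).image Prod.fst

/-- The columns of the points of `T` in row `y` other than the leftmost one. These are the columns
that `T` leaves for good at height `y`. -/
def innerOf (T : Finset (ℕ × ℕ)) (y : ℕ) : Finset ℕ :=
  (rowOf T y).filter fun x => ∃ w < x, w ∈ rowOf T y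

/-- The `ν`-trees in combinatorial form: row `y ≤ n` of the shape has the columns `0, …, r y`, no
two points of `T` are incompatible, and `T` has the maximal possible number of points. -/
structure IsStaircaseTree (r : ℕ → ℕ) (n : ℕ) (T : Finset (ℕ × ℕ)) : Prop where
  height_le : ∀ {x y}, (x, y) ∈ T → y ≤ n
  col_le : ∀ {x y}, (x, y) ∈ T → x ≤ r y
  lt_of_lt : ∀ {x y x' y'}, (x, y) ∈ T → (x', y') ∈ T → x < x' → y < y' → r y < x'
  card_eq : T.card = r n + n + 1

/-- The `ν`-path of a `ν`-tree, recorded by the abscissa `pathOf T y` at which it reaches height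
`y`; this is the left flushing map. -/
def pathOf (T : Finset (ℕ × ℕ)) (y : ℕ) : ℕ := ∑ k ∈ Finset.range y, (innerOf T k).card

/-- The `ν`-paths in combinatorial form: `Z y` is the abscissa at which the path reaches height
`y`, and `Z (y + 1)` is the one at which it leaves height `y`. -/
structure IsStaircasePath (r : ℕ → ℕ) (n : ℕ) (Z : ℕ → ℕ) : Prop where
  zero : Z 0 = 0
  monotone : Monotone Z
  succ_le : ∀ y, Z (y + 1) ≤ r y
  eq_top : ∀ y, n < y → Z y = r n

variable {r : ℕ → ℕ} {n : ℕ} {T : Finset (ℕ × ℕ)}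

theorem mem_rowOf {x y : ℕ} : x ∈ rowOf T y ↔ (x, y) ∈ T := by
  simp [rowOf]

theorem mem_innerOf {x y : ℕ} : x ∈ innerOf T y ↔ (x, y) ∈ T ∧ ∃ w < x, (w, y) ∈ T := by
  simp only [innerOf, Finset.mem_filter, mem_rowOf]

theorem eq_of_rowOf_eq {T' : Finset (ℕ × ℕ)} (h : ∀ y, rowOf T y = rowOf T' y) : T = T' := by
  ext ⟨x, y⟩
  rw [← mem_rowOf, h, mem_rowOf]

theorem exists_isLeast_row {x y : ℕ} (hx : (x, y) ∈ T) :
    ∃ w, IsLeast {w | (w, y) ∈ T} w :=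
  ⟨_, isLeast_csInf (s := {w | (w, y) ∈ T}) ⟨x, hx⟩⟩

theorem innerOf_eq_erase {w y : ℕ} (hw : IsLeast {w | (w, y) ∈ T} w) :
    innerOf T y = (rowOf T y).erase w := by
  ext x
  simp only [mem_innerOf, Finset.mem_erase, mem_rowOf]
  constructor
  · rintro ⟨hx, v, hvx, hv⟩
    exact ⟨((hw.2 hv).trans_lt hvx).ne', hx⟩
  · rintro ⟨hne, hx⟩
    exact ⟨hx, w, (hw.2 hx).lt_of_ne' hne, hw.1⟩

theorem card_rowOf_eq {x y : ℕ} (hx : (x, y) ∈ T) :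
    (rowOf T y).card = (innerOf T y).card + 1 := by
  obtain ⟨w, hw⟩ := exists_isLeast_row hx
  rw [innerOf_eq_erase hw, Finset.card_erase_add_one (mem_rowOf.2 hw.1)]

theorem card_rowOf_le (T : Finset (ℕ × ℕ)) (y : ℕ) :
    (rowOf T y).card ≤ (innerOf T y).card + 1 := by
  rcases (rowOf T y).eq_empty_or_nonempty with h | ⟨x, hx⟩
  · simp [h]
  · exact (card_rowOf_eq (mem_rowOf.1 hx)).le

theorem card_eq_sum_card_rowOf {N : ℕ} (h : ∀ p ∈ T, p.2 < N) :
    T.card = ∑ y ∈ Finset.range N, (rowOf T y).card := by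
  rw [Finset.card_eq_sum_card_fiberwise (f := Prod.snd) (t := Finset.range N)
    fun p hp => Finset.mem_coe.2 (Finset.mem_range.2 (h p hp))]
  refine Finset.sum_congr rfl fun y _ => (Finset.card_image_of_injOn ?_).symm
  rintro ⟨x, y₁⟩ hp ⟨x', y₂⟩ hp' (rfl : x = x')
  simp_all

theorem pathOf_zero (T : Finset (ℕ × ℕ)) : pathOf T 0 = 0 := rfl

theorem pathOf_succ (T : Finset (ℕ × ℕ)) (y : ℕ) :
    pathOf T (y + 1) = pathOf T y + (innerOf T y).card :=
  Finset.sum_range_succ _ _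

theorem pathOf_mono (T : Finset (ℕ × ℕ)) : Monotone (pathOf T) :=
  monotone_nat_of_le_succ fun y => (pathOf_succ T y).symm ▸ Nat.le_add_right _ _

theorem sum_card_innerOf_add_one (T : Finset (ℕ × ℕ)) (n : ℕ) :
    ∑ y ∈ Finset.range (n + 1), ((innerOf T y).card + 1) = pathOf T (n + 1) + n + 1 := by
  simp [Finset.sum_add_distrib, pathOf, add_assoc]

namespace IsStaircaseTree

theorem le_of_mem_innerOf (hT : IsStaircaseTree r n T) {x y y' : ℕ} (hx : x ∈ innerOf T y)
    (hx' : (x, y') ∈ T) : y' ≤ y := by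
  obtain ⟨hxy, w, hwx, hw⟩ := mem_innerOf.1 hx
  by_contra! hlt
  exact absurd (hT.lt_of_lt hw hx' hwx hlt) (hT.col_le hxy).not_gt

theorem eq_of_mem_innerOf (hT : IsStaircaseTree r n T) {x y y' : ℕ} (hx : x ∈ innerOf T y)
    (hx' : x ∈ innerOf T y') : y = y' :=
  le_antisymm (hT.le_of_mem_innerOf hx' (mem_innerOf.1 hx).1)
    (hT.le_of_mem_innerOf hx (mem_innerOf.1 hx').1)

theorem card_biUnion_innerOf (hT : IsStaircaseTree r n T) (y : ℕ) :
    ((Finset.range y).biUnion (innerOf T)).card = pathOf T y :=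
  Finset.card_biUnion fun _ _ _ _ hne => Finset.disjoint_left.2 fun _ hx hx' =>
    hne (hT.eq_of_mem_innerOf hx hx')

theorem biUnion_innerOf_subset (hr : Monotone r) (hT : IsStaircaseTree r n T) (y : ℕ) :
    (Finset.range (y + 1)).biUnion (innerOf T) ⊆ Finset.Icc 1 (r y) := by
  intro x hx
  obtain ⟨k, hk, hxk⟩ := Finset.mem_biUnion.1 hx
  obtain ⟨hxT, w, hwx, -⟩ := mem_innerOf.1 hxk
  exact Finset.mem_Icc.2
    ⟨by omega, (hT.col_le hxT).trans (hr (Nat.lt_succ_iff.1 (Finset.mem_range.1 hk)))⟩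

theorem pathOf_succ_le (hr : Monotone r) (hT : IsStaircaseTree r n T) (y : ℕ) :
    pathOf T (y + 1) ≤ r y := by
  rw [← hT.card_biUnion_innerOf]
  simpa using Finset.card_le_card (hT.biUnion_innerOf_subset hr y)

theorem card_eq_sum (hT : IsStaircaseTree r n T) :
    ∑ y ∈ Finset.range (n + 1), (rowOf T y).card = r n + n + 1 := by
  rw [← card_eq_sum_card_rowOf fun p hp => Nat.lt_succ_iff.2 (hT.height_le hp), hT.card_eq]

/- The rows have at most `pathOf T (n + 1) + n + 1 ≤ r n + n + 1 = T.card` points in total, so all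
the inequalities in this count are equalities. -/
theorem pathOf_eq_top (hr : Monotone r) (hT : IsStaircaseTree r n T) :
    pathOf T (n + 1) = r n := by
  have hle := Finset.sum_le_sum fun y (_ : y ∈ Finset.range (n + 1)) => card_rowOf_le T y
  rw [hT.card_eq_sum, sum_card_innerOf_add_one] at hle
  exact le_antisymm (hT.pathOf_succ_le hr n) (by omega)

theorem card_rowOf (hr : Monotone r) (hT : IsStaircaseTree r n T) {y : ℕ} (hy : y ≤ n) :
    (rowOf T y).card = (innerOf T y).card + 1 := by
  have hsum : ∑ y ∈ Finset.range (n + 1), (rowOf T y).card =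
      ∑ y ∈ Finset.range (n + 1), ((innerOf T y).card + 1) := by
    rw [hT.card_eq_sum, sum_card_innerOf_add_one, hT.pathOf_eq_top hr]
  exact (Finset.sum_eq_sum_iff_of_le fun y _ => card_rowOf_le T y).1 hsum y
    (Finset.mem_range.2 (Nat.lt_succ_iff.2 hy))

theorem card_rowOf_add_pathOf (hr : Monotone r) (hT : IsStaircaseTree r n T) {y : ℕ}
    (hy : y ≤ n) : (rowOf T y).card + pathOf T y = pathOf T (y + 1) + 1 := by
  rw [hT.card_rowOf hr hy, pathOf_succ]
  omega

theorem rowOf_eq_empty (hT : IsStaircaseTree r n T) {y : ℕ} (hy : n < y) : rowOf T y = ∅ :=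
  Finset.eq_empty_of_forall_notMem fun _ hx => hy.not_ge (hT.height_le (mem_rowOf.1 hx))

theorem exists_isLeast (hr : Monotone r) (hT : IsStaircaseTree r n T) {y : ℕ} (hy : y ≤ n) :
    ∃ w, IsLeast {w | (w, y) ∈ T} w := by
  obtain ⟨x, hx⟩ := Finset.card_pos.1 (by rw [hT.card_rowOf hr hy]; omega : 0 < (rowOf T y).card)
  exact exists_isLeast_row (mem_rowOf.1 hx)

theorem exists_mem_innerOf (hr : Monotone r) (hT : IsStaircaseTree r n T) {z : ℕ} (hz : 1 ≤ z)
    (hzn : z ≤ r n) : ∃ y ≤ n, z ∈ innerOf T y := by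
  have heq := Finset.eq_of_subset_of_card_le (hT.biUnion_innerOf_subset hr n)
    (by rw [hT.card_biUnion_innerOf, hT.pathOf_eq_top hr]; simp)
  obtain ⟨y, hy, hzy⟩ := Finset.mem_biUnion.1 (heq ▸ Finset.mem_Icc.2 ⟨hz, hzn⟩)
  exact ⟨y, Nat.lt_succ_iff.1 (Finset.mem_range.1 hy), hzy⟩

theorem mem_of_lt (hr : Monotone r) (hT : IsStaircaseTree r n T) {e y z : ℕ} (he : (e, y) ∈ T)
    (hez : e < z) (hz : z ≤ r y) (hfree : ∀ k < y, z ∉ innerOf T k) : (z, y) ∈ T := by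
  obtain ⟨k, -, hzk⟩ :=
    hT.exists_mem_innerOf hr (by omega) (hz.trans (hr (hT.height_le he)))
  have hzT := (mem_innerOf.1 hzk).1
  rcases lt_trichotomy k y with hky | rfl | hyk
  · exact absurd hzk (hfree k hky)
  · exact hzT
  · exact absurd (hT.lt_of_lt he hzT hez hyk) hz.not_gt

theorem zero_mem (hr : Monotone r) (hT : IsStaircaseTree r n T) : (0, n) ∈ T := by
  obtain ⟨w, hw⟩ := hT.exists_isLeast hr le_rfl
  rcases Nat.eq_zero_or_pos w with rfl | hpos
  · exact hw.1
  · obtain ⟨y, hy, hwy⟩ := hT.exists_mem_innerOf hr hpos (hT.col_le hw.1)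
    obtain rfl := le_antisymm hy (hT.le_of_mem_innerOf hwy hw.1)
    rw [innerOf_eq_erase hw] at hwy
    simp at hwy

theorem isStaircasePath_pathOf (hr : Monotone r) (hT : IsStaircaseTree r n T) :
    IsStaircasePath r n (pathOf T) where
  zero := pathOf_zero T
  monotone := pathOf_mono T
  succ_le := hT.pathOf_succ_le hr
  eq_top := Nat.le_induction (hT.pathOf_eq_top hr) fun y hy ih => by
    simpa [pathOf_succ, innerOf, hT.rowOf_eq_empty hy] using ih

theorem rowOf_subset_of_isLeast (hr : Monotone r) (hT : IsStaircaseTree r n T)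
    {T' : Finset (ℕ × ℕ)} (hT' : IsStaircaseTree r n T') {y e e' : ℕ}
    (hlow : ∀ k < y, rowOf T k = rowOf T' k) (he : IsLeast {w | (w, y) ∈ T} e)
    (he' : IsLeast {w | (w, y) ∈ T'} e') (hee' : e ≤ e') : rowOf T' y ⊆ rowOf T y := by
  intro z hz
  rw [mem_rowOf] at hz ⊢
  rcases (hee'.trans (he'.2 hz)).eq_or_lt with rfl | hez
  · exact he.1
  · refine hT.mem_of_lt hr he.1 hez (hT'.col_le hz) fun k hk hzk => ?_
    have hzk' : z ∈ innerOf T' k := by rwa [innerOf, ← hlow k hk]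
    exact hk.not_ge (hT'.le_of_mem_innerOf hzk' hz)

theorem eq_of_card_rowOf_eq (hr : Monotone r) (hT : IsStaircaseTree r n T)
    {T' : Finset (ℕ × ℕ)} (hT' : IsStaircaseTree r n T')
    (hcard : ∀ y ≤ n, (rowOf T y).card = (rowOf T' y).card) : T = T' := by
  refine eq_of_rowOf_eq fun y => ?_
  induction y using Nat.strong_induction_on with
  | _ y ih =>
    rcases lt_or_ge n y with hy | hy
    · rw [hT.rowOf_eq_empty hy, hT'.rowOf_eq_empty hy]
    obtain ⟨e, he⟩ := hT.exists_isLeast hr hy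
    obtain ⟨e', he'⟩ := hT'.exists_isLeast hr hy
    rcases le_total e e' with hee' | hee'
    · exact (Finset.eq_of_subset_of_card_le
        (hT.rowOf_subset_of_isLeast hr hT' ih he he' hee') (hcard y hy).le).symm
    · exact Finset.eq_of_subset_of_card_le
        (hT'.rowOf_subset_of_isLeast hr hT (fun k hk => (ih k hk).symm) he' he hee')
        (hcard y hy).ge

theorem eq_of_pathOf_eq (hr : Monotone r) (hT : IsStaircaseTree r n T)
    {T' : Finset (ℕ × ℕ)} (hT' : IsStaircaseTree r n T') (h : pathOf T = pathOf T') : T = T' := by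
  refine hT.eq_of_card_rowOf_eq hr hT' fun y hy => ?_
  have := hT.card_rowOf_add_pathOf hr hy
  have := hT'.card_rowOf_add_pathOf hr hy
  simp_all only
  omega

end IsStaircaseTree

end Trees

section TreeOfPath

/-- The `H`-th column, counted from the left and from `0`, that the tree of the path `Z` has not yet
left for good when row `y` is reached. Passing row `y` removes the columns with indices from
`r y - Z (y + 1) + 1` to `r y - Z y`, and every later column moves down by `Z (y + 1) - Z y`; the
value is only meaningful for columns up to `r y`, that is for `H ≤ r y - Z y`. -/
def freeColumn (r Z : ℕ → ℕ) : ℕ → ℕ → ℕ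
  | 0, H => H
  | y + 1, H => if r y < H + Z (y + 1) then H + Z (y + 1) else freeColumn r Z y H

/-- The `ν`-tree of a `ν`-path, that is the right flushing map: a point of the path in row `y` at
horizontal distance `H` from the right end of the row is moved to the `H`-th free column. -/
def treeOf (r : ℕ → ℕ) (n : ℕ) (Z : ℕ → ℕ) : Finset (ℕ × ℕ) :=
  (Finset.range (n + 1)).biUnion fun y =>
    (Finset.Icc (r y - Z (y + 1)) (r y - Z y)).image fun H => (freeColumn r Z y H, y)

variable {r Z : ℕ → ℕ} {n : ℕ}

theorem freeColumn_eq_of_forall_le {a y H : ℕ} (hay : a ≤ y)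
    (h : ∀ k, a ≤ k → k < y → H + Z (k + 1) ≤ r k) :
    freeColumn r Z y H = freeColumn r Z a H := by
  induction y, hay using Nat.le_induction with
  | base => rfl
  | succ y hay ih =>
    rw [freeColumn, if_neg (h y hay y.lt_succ_self).not_gt]
    exact ih fun k hak hky => h k hak (hky.trans y.lt_succ_self)

/- A column of the shape at height `a` that is still free at a later height `y` has stayed free, so
no row in between has removed its index. -/
theorem freeColumn_eq_of_le (hr : Monotone r) {a y H : ℕ} (hay : a ≤ y)
    (hle : freeColumn r Z y H ≤ r a) :
    freeColumn r Z y H = freeColumn r Z a H ∧ ∀ k, a ≤ k → k < y → H + Z (k + 1) ≤ r k := by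
  have hfree : ∀ k, a ≤ k → k < y → H + Z (k + 1) ≤ r k := by
    induction y, hay using Nat.le_induction with
    | base => exact fun k hak hka => absurd hak hka.not_ge
    | succ y hay ih =>
      rw [freeColumn] at hle
      have := hr hay
      split_ifs at hle with hlast
      · omega
      · intro k hak hky
        rcases (Nat.lt_succ_iff.1 hky).eq_or_lt with rfl | hky
        · exact not_lt.1 hlast
        · exact ih hle k hak hky
  exact ⟨freeColumn_eq_of_forall_le hay hfree, hfree⟩

theorem rowOf_treeOf {y : ℕ} (hy : y ≤ n) : rowOf (treeOf r n Z) y =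
    (Finset.Icc (r y - Z (y + 1)) (r y - Z y)).image (freeColumn r Z y) := by
  ext x
  simp only [mem_rowOf, treeOf, Finset.mem_biUnion, Finset.mem_range, Nat.lt_succ_iff,
    Finset.mem_image, Prod.mk.injEq]
  constructor
  · rintro ⟨y, -, H, hH, hx, rfl⟩
    exact ⟨H, hH, hx⟩
  · rintro ⟨H, hH, hx⟩
    exact ⟨y, hy, H, hH, hx, rfl⟩

namespace IsStaircasePath

theorem le (hr : Monotone r) (hZ : IsStaircasePath r n Z) (y : ℕ) : Z y ≤ r y := by
  cases y with
  | zero => simp [hZ.zero]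
  | succ y => exact (hZ.succ_le y).trans (hr y.le_succ)

theorem le_succ (hZ : IsStaircasePath r n Z) (y : ℕ) : Z y ≤ Z (y + 1) :=
  hZ.monotone y.le_succ

theorem freeColumn_zero (hZ : IsStaircasePath r n Z) (y : ℕ) : freeColumn r Z y 0 = 0 := by
  rw [freeColumn_eq_of_forall_le y.zero_le fun k _ _ => by simpa using hZ.succ_le k, freeColumn]

theorem freeColumn_le (hr : Monotone r) (hZ : IsStaircasePath r n Z) {y H : ℕ}
    (h : H + Z y ≤ r y) : freeColumn r Z y H ≤ r y := by
  induction y with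
  | zero => simpa [freeColumn, hZ.zero] using h
  | succ y ih =>
    have := hZ.le_succ y
    rw [freeColumn]
    split_ifs
    · exact h
    · exact (ih (by omega)).trans (hr y.le_succ)

theorem freeColumn_lt (hr : Monotone r) (hZ : IsStaircasePath r n Z) {y H H' : ℕ}
    (hH : H < H') (h : H' + Z y ≤ r y) : freeColumn r Z y H < freeColumn r Z y H' := by
  induction y with
  | zero => simpa only [freeColumn]
  | succ y ih =>
    have := hZ.le_succ y
    simp only [freeColumn]
    split_ifs
    · omega
    · omega
    · have := hZ.freeColumn_le hr (show H + Z y ≤ r y by omega)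
      omega
    · exact ih (by omega)

theorem strictMonoOn_freeColumn (hr : Monotone r) (hZ : IsStaircasePath r n Z) (y : ℕ) :
    StrictMonoOn (freeColumn r Z y) {H | H + Z y ≤ r y} :=
  fun _ _ _ h hlt => hZ.freeColumn_lt hr hlt h

theorem mem_treeOf (hr : Monotone r) (hZ : IsStaircasePath r n Z) {x y : ℕ} :
    (x, y) ∈ treeOf r n Z ↔
      y ≤ n ∧ ∃ H, r y ≤ H + Z (y + 1) ∧ H + Z y ≤ r y ∧ freeColumn r Z y H = x := by
  simp only [treeOf, Finset.mem_biUnion, Finset.mem_range, Nat.lt_succ_iff, Finset.mem_image,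
    Finset.mem_Icc, Prod.mk.injEq]
  have := hZ.le hr y
  constructor
  · rintro ⟨y, hy, H, ⟨hlo, hhi⟩, hx, rfl⟩
    exact ⟨hy, H, by omega, by omega, hx⟩
  · rintro ⟨hy, H, hlo, hhi, hx⟩
    exact ⟨y, hy, H, ⟨by omega, by omega⟩, hx, rfl⟩

theorem card_rowOf_treeOf (hr : Monotone r) (hZ : IsStaircasePath r n Z) {y : ℕ} (hy : y ≤ n) :
    (rowOf (treeOf r n Z) y).card + Z y = Z (y + 1) + 1 := by
  have := hZ.le hr y
  have := hZ.succ_le y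
  have := hZ.le_succ y
  rw [rowOf_treeOf hy, Finset.card_image_of_injOn, Nat.card_Icc]
  · omega
  · refine (hZ.strictMonoOn_freeColumn hr y).injOn.mono fun H hH => ?_
    rw [Finset.coe_Icc, Set.mem_Icc] at hH
    exact Nat.add_le_of_le_sub (hZ.le hr y) hH.2

theorem isStaircaseTree_treeOf (hr : Monotone r) (hZ : IsStaircasePath r n Z) :
    IsStaircaseTree r n (treeOf r n Z) where
  height_le h := ((hZ.mem_treeOf hr).1 h).1
  col_le h := by
    obtain ⟨-, H, -, hhi, rfl⟩ := (hZ.mem_treeOf hr).1 h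
    exact hZ.freeColumn_le hr hhi
  lt_of_lt {x y x' y'} h h' hx hy := by
    obtain ⟨-, H, hlo, hhi, rfl⟩ := (hZ.mem_treeOf hr).1 h
    obtain ⟨-, H', -, -, rfl⟩ := (hZ.mem_treeOf hr).1 h'
    by_contra! hle
    obtain ⟨heq, hfree⟩ := freeColumn_eq_of_le hr hy.le hle
    have hH' : H' ≤ H := by
      have := hfree y le_rfl hy
      omega
    rw [heq] at hx
    exact hx.not_ge ((hZ.strictMonoOn_freeColumn hr y).monotoneOn
      ((Nat.add_le_add_right hH' _).trans hhi) hhi hH')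
  card_eq := by
    have hsum : ∀ N ≤ n + 1,
        ∑ y ∈ Finset.range N, (rowOf (treeOf r n Z) y).card = Z N + N := by
      intro N hN
      induction N with
      | zero => simp [hZ.zero]
      | succ N ih =>
        rw [Finset.sum_range_succ, ih (by omega)]
        have := hZ.card_rowOf_treeOf hr (Nat.succ_le_succ_iff.1 hN)
        omega
    rw [card_eq_sum_card_rowOf fun p hp => Nat.lt_succ_iff.2 ((hZ.mem_treeOf hr).1 hp).1,
      hsum _ le_rfl, hZ.eq_top _ n.lt_succ_self, add_assoc]

theorem pathOf_treeOf (hr : Monotone r) (hZ : IsStaircasePath r n Z) :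
    pathOf (treeOf r n Z) = Z := by
  have hT := hZ.isStaircaseTree_treeOf hr
  funext y
  induction y with
  | zero => rw [pathOf_zero, hZ.zero]
  | succ y ih =>
    rcases le_or_gt y n with hy | hy
    · have := hT.card_rowOf_add_pathOf hr hy
      have := hZ.card_rowOf_treeOf hr hy
      omega
    · rw [(hT.isStaircasePath_pathOf hr).eq_top _ (by omega), hZ.eq_top _ (by omega)]

end IsStaircasePath

theorem IsStaircaseTree.treeOf_pathOf {T : Finset (ℕ × ℕ)} (hr : Monotone r)
    (hT : IsStaircaseTree r n T) : treeOf r n (pathOf T) = T :=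
  have hZ := hT.isStaircasePath_pathOf hr
  (hZ.isStaircaseTree_treeOf hr).eq_of_pathOf_eq hr hT (hZ.pathOf_treeOf hr)

theorem bijOn_treeOf (hr : Monotone r) (n : ℕ) :
    Set.BijOn (treeOf r n) {Z | IsStaircasePath r n Z} {T | IsStaircaseTree r n T} :=
  Set.BijOn.mk (fun _ hZ => hZ.isStaircaseTree_treeOf hr)
    (fun _ hZ _ hZ' h => by rw [← hZ.pathOf_treeOf hr, h, hZ'.pathOf_treeOf hr])
    fun T hT => ⟨pathOf T, hT.isStaircasePath_pathOf hr, hT.treeOf_pathOf hr⟩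

end TreeOfPath

section Flips

/-- The horizontal distance from the last point of the path `Z` in row `y` to the right end of the
row. -/
def slack (r Z : ℕ → ℕ) (y : ℕ) : ℕ := r y - Z (y + 1)

/-- The `ν`-Tamari covering data of the path `Z`: it has a valley in row `a`, and the next point of
`Z` at the same horizontal distance lies in row `b`. -/
structure IsRotationSpan (r : ℕ → ℕ) (n : ℕ) (Z : ℕ → ℕ) (a b : ℕ) : Prop where
  lt : a < b
  le : b ≤ n
  lt_succ : Z a < Z (a + 1)
  slack_le : slack r Z b ≤ slack r Z a
  lt_slack : ∀ k, a < k → k < b → slack r Z a < slack r Z k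

/-- The path `Z` with the part strictly above row `a`, up to the arrival in row `b`, moved one step
to the left. -/
def lowerOn (Z : ℕ → ℕ) (a b k : ℕ) : ℕ := if a < k ∧ k ≤ b then Z k - 1 else Z k

/-- The covering relation of the `ν`-Tamari lattice on paths recorded by abscissas. -/
def IsPathCover (r : ℕ → ℕ) (n : ℕ) (Z Z' : ℕ → ℕ) : Prop :=
  ∃ a b, IsRotationSpan r n Z a b ∧ Z' = lowerOn Z a b

/-- The tree `T'` arises from `T` by moving one point to a higher row. -/
def IsUpFlip (T T' : Finset (ℕ × ℕ)) : Prop :=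
  ∃ p ∈ T, ∃ q ∈ T', p.2 < q.2 ∧ T.erase p = T'.erase q

/-- The leftmost point `(e, a)` of row `a` in the tree `T` can be rotated to `(z, b)`, where
`(z, a)` is its right neighbour and `(e, b)` is the next point above it. The last condition, on the
rows in between, is equivalent to this for trees. -/
structure IsRotatable (r : ℕ → ℕ) (T : Finset (ℕ × ℕ)) (e z a b : ℕ) : Prop where
  isLeast : IsLeast {w | (w, a) ∈ T} e
  isLeast_right : IsLeast {w | (w, a) ∈ T ∧ e < w} z
  lt : a < b
  mem_top : (e, b) ∈ T
  lt_of_mem : ∀ {w k}, (w, k) ∈ T → a < k → k < b → r a < w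

variable {r Z : ℕ → ℕ} {n : ℕ} {T T' : Finset (ℕ × ℕ)}

section Erase

variable {α : Type*} [DecidableEq α] {S S' : Finset α} {p q s : α}

theorem mem_right_of_erase_eq_erase (h : S.erase p = S'.erase q) (hs : s ∈ S) (hne : s ≠ p) :
    s ∈ S' :=
  Finset.mem_of_mem_erase (h ▸ Finset.mem_erase.2 ⟨hne, hs⟩)

theorem notMem_right_of_erase_eq_erase (h : S.erase p = S'.erase q) (hpq : p ≠ q) : p ∉ S' :=
  fun hp => Finset.notMem_erase p S (h ▸ Finset.mem_erase.2 ⟨hpq, hp⟩)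

end Erase

theorem card_rowOf_erase {p : ℕ × ℕ} (hp : p ∈ T) (k : ℕ) :
    (rowOf (T.erase p) k).card + (if k = p.2 then 1 else 0) = (rowOf T k).card := by
  obtain ⟨x, y⟩ := p
  have hrow : rowOf (T.erase (x, y)) k = if k = y then (rowOf T k).erase x else rowOf T k := by
    ext w
    split_ifs <;> simp_all [mem_rowOf]
  rw [hrow]
  split_ifs with hk
  · exact Finset.card_erase_add_one (mem_rowOf.2 (hk ▸ hp))
  · rfl

theorem card_rowOf_add_of_erase_eq_erase {p q : ℕ × ℕ} (hp : p ∈ T) (hq : q ∈ T')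
    (h : T.erase p = T'.erase q) (k : ℕ) :
    (rowOf T k).card + (if k = q.2 then 1 else 0) =
      (rowOf T' k).card + (if k = p.2 then 1 else 0) := by
  rw [← card_rowOf_erase hp, ← card_rowOf_erase hq, h]
  omega

theorem snd_ne_of_erase_eq_erase (hr : Monotone r) (hT : IsStaircaseTree r n T)
    (hT' : IsStaircaseTree r n T') {p q : ℕ × ℕ} (hp : p ∈ T) (hq : q ∈ T') (hpq : p ≠ q)
    (h : T.erase p = T'.erase q) : p.2 ≠ q.2 := by
  intro heq
  have hTT' : T = T' := hT.eq_of_card_rowOf_eq hr hT' fun k _ => by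
    have := card_rowOf_add_of_erase_eq_erase hp hq h k
    rw [heq] at this
    omega
  exact notMem_right_of_erase_eq_erase h hpq (hTT' ▸ hp)

theorem pathOf_eq_lowerOn_of_erase_eq_erase (hr : Monotone r) (hT : IsStaircaseTree r n T)
    (hT' : IsStaircaseTree r n T') {p q : ℕ × ℕ} (hp : p ∈ T) (hq : q ∈ T') (hpq : p.2 < q.2)
    (h : T.erase p = T'.erase q) : pathOf T' = lowerOn (pathOf T) p.2 q.2 := by
  have hrow := card_rowOf_add_of_erase_eq_erase hp hq h
  have hqn : q.2 ≤ n := hT'.height_le hq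
  have hadd : ∀ k, pathOf T' k + (if p.2 < k ∧ k ≤ q.2 then 1 else 0) = pathOf T k := by
    intro k
    induction k with
    | zero => simp [pathOf_zero]
    | succ k ih =>
      rcases le_or_gt k n with hk | hk
      · have := hT.card_rowOf_add_pathOf hr hk
        have := hT'.card_rowOf_add_pathOf hr hk
        have := hrow k
        by_cases hkp : k = p.2
        · subst hkp
          split_ifs at * <;> omega
        · split_ifs at * <;> omega
      · rw [(hT.isStaircasePath_pathOf hr).eq_top _ (by omega),
          (hT'.isStaircasePath_pathOf hr).eq_top _ (by omega), if_neg (by omega), add_zero]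
  funext k
  have := hadd k
  rw [lowerOn]
  split_ifs at * <;> omega

namespace IsRotatable

variable {e z a b : ℕ}

theorem mem_innerOf (h : IsRotatable r T e z a b) : z ∈ innerOf T a :=
  _root_.mem_innerOf.2 ⟨h.isLeast_right.1.1, e, h.isLeast_right.1.2, h.isLeast.1⟩

theorem notMem (hT : IsStaircaseTree r n T) (h : IsRotatable r T e z a b) : (z, b) ∉ T :=
  fun hz => h.lt.not_ge (hT.le_of_mem_innerOf h.mem_innerOf hz)

theorem isStaircaseTree_insert_erase (hr : Monotone r) (hT : IsStaircaseTree r n T)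
    (h : IsRotatable r T e z a b) : IsStaircaseTree r n (insert (z, b) (T.erase (e, a))) := by
  obtain ⟨⟨hza, hez⟩, hmin⟩ := h.isLeast_right
  have hlt := h.lt
  have hcard : (insert (z, b) (T.erase (e, a))).card = r n + n + 1 := by
    rw [Finset.card_insert_of_notMem fun hz => h.notMem hT (Finset.mem_of_mem_erase hz),
      Finset.card_erase_add_one h.isLeast.1, hT.card_eq]
  refine ⟨?_, ?_, ?_, hcard⟩ <;>
    simp only [Finset.mem_insert, Finset.mem_erase, ne_eq, Prod.mk.injEq]
  · rintro x y (⟨-, rfl⟩ | ⟨-, hxy⟩)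
    exacts [hT.height_le h.mem_top, hT.height_le hxy]
  · rintro x y (⟨rfl, rfl⟩ | ⟨-, hxy⟩)
    exacts [(hT.col_le hza).trans (hr hlt.le), hT.col_le hxy]
  · rintro x y x' y' (⟨rfl, rfl⟩ | ⟨hne, hxy⟩) (⟨rfl, rfl⟩ | ⟨-, hxy'⟩) hx hy
    · omega
    · exact hT.lt_of_lt h.mem_top hxy' (hez.trans hx) hy
    · rcases lt_trichotomy y a with hya | rfl | hay
      · exact hT.lt_of_lt hxy hza hx hya
      · have hex : e < x := (h.isLeast.2 hxy).lt_of_ne fun hxe => hne ⟨hxe.symm, rfl⟩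
        exact absurd (hmin ⟨hxy, hex⟩) hx.not_ge
      · have := h.lt_of_mem hxy hay hy
        have := hT.col_le hza
        omega
    · exact hT.lt_of_lt hxy hxy' hx hy

theorem erase_insert_erase (hT : IsStaircaseTree r n T) (h : IsRotatable r T e z a b) :
    (insert (z, b) (T.erase (e, a))).erase (z, b) = T.erase (e, a) :=
  Finset.erase_insert fun hz => h.notMem hT (Finset.mem_of_mem_erase hz)

end IsRotatable

namespace IsStaircasePath

theorem slack_add (hZ : IsStaircasePath r n Z) (y : ℕ) : slack r Z y + Z (y + 1) = r y :=
  Nat.sub_add_cancel (hZ.succ_le y)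

theorem isLeast_row_treeOf (hr : Monotone r) (hZ : IsStaircasePath r n Z) {y : ℕ} (hy : y ≤ n) :
    IsLeast {w | (w, y) ∈ treeOf r n Z} (freeColumn r Z y (slack r Z y)) := by
  have hslack := hZ.slack_add y
  have := hZ.le_succ y
  refine ⟨(hZ.mem_treeOf hr).2 ⟨hy, _, hslack.ge, by omega, rfl⟩, fun w hw => ?_⟩
  obtain ⟨-, H, hlo, hhi, rfl⟩ := (hZ.mem_treeOf hr).1 hw
  have hle : slack r Z y ≤ H := by omega
  exact (hZ.strictMonoOn_freeColumn hr y).monotoneOn (by grind) hhi hle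

theorem isLeast_right_treeOf (hr : Monotone r) (hZ : IsStaircasePath r n Z) {y : ℕ} (hy : y ≤ n)
    (hlt : Z y < Z (y + 1)) :
    IsLeast {w | (w, y) ∈ treeOf r n Z ∧ freeColumn r Z y (slack r Z y) < w}
      (freeColumn r Z y (slack r Z y + 1)) := by
  have hslack := hZ.slack_add y
  have hmono := hZ.strictMonoOn_freeColumn hr y
  have hhi' : slack r Z y + 1 + Z y ≤ r y := by omega
  refine ⟨⟨(hZ.mem_treeOf hr).2 ⟨hy, _, by omega, hhi', rfl⟩,
    hZ.freeColumn_lt hr (Nat.lt_succ_self _) hhi'⟩, ?_⟩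
  rintro w ⟨hw, hew⟩
  obtain ⟨-, H, -, hhi, rfl⟩ := (hZ.mem_treeOf hr).1 hw
  exact hmono.monotoneOn hhi' hhi ((hmono.lt_iff_lt (by grind) hhi).1 hew)

theorem isRotatable_treeOf (hr : Monotone r) (hZ : IsStaircasePath r n Z) {a b : ℕ}
    (h : IsRotationSpan r n Z a b) :
    IsRotatable r (treeOf r n Z) (freeColumn r Z a (slack r Z a))
      (freeColumn r Z a (slack r Z a + 1)) a b := by
  have han : a ≤ n := h.lt.le.trans h.le
  have hge : ∀ k, a ≤ k → k < b → slack r Z a ≤ slack r Z k := fun k hak hkb =>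
    hak.eq_or_lt.elim (fun hak => hak ▸ le_rfl) fun hak => (h.lt_slack k hak hkb).le
  have hfree : ∀ k, a ≤ k → k < b → slack r Z a + Z (k + 1) ≤ r k := fun k hak hkb => by
    have := hge k hak hkb
    have := hZ.slack_add k
    omega
  refine ⟨hZ.isLeast_row_treeOf hr han, hZ.isLeast_right_treeOf hr han h.lt_succ, h.lt, ?_, ?_⟩
  · refine (hZ.mem_treeOf hr).2
      ⟨h.le, slack r Z a, ?_, ?_, freeColumn_eq_of_forall_le h.lt.le hfree⟩
    · have := h.slack_le
      have := hZ.slack_add b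
      omega
    · obtain ⟨k, rfl⟩ := Nat.exists_eq_add_of_lt h.lt
      exact (hfree _ (by omega) (Nat.lt_succ_self _)).trans (hr (Nat.le_succ _))
  · intro w k hw hak hkb
    obtain ⟨-, H, hlo, -, rfl⟩ := (hZ.mem_treeOf hr).1 hw
    by_contra! hle
    have := (freeColumn_eq_of_le hr hak.le hle).2 a le_rfl hak
    have := h.lt_slack k hak hkb
    have := hZ.slack_add a
    have := hZ.slack_add k
    omega

theorem isUpFlip_of_isPathCover (hr : Monotone r) (hZ : IsStaircasePath r n Z) {Z' : ℕ → ℕ}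
    (h : IsPathCover r n Z Z') : IsUpFlip (treeOf r n Z) (treeOf r n Z') := by
  obtain ⟨a, b, hspan, rfl⟩ := h
  have hT := hZ.isStaircaseTree_treeOf hr
  have hrot := hZ.isRotatable_treeOf hr hspan
  have hT' := hrot.isStaircaseTree_insert_erase hr hT
  have herase := (hrot.erase_insert_erase hT).symm
  have hpath := pathOf_eq_lowerOn_of_erase_eq_erase hr hT hT' hrot.isLeast.1
    (Finset.mem_insert_self _ _) hspan.lt herase
  rw [hZ.pathOf_treeOf hr] at hpath
  rw [← hpath, hT'.treeOf_pathOf hr]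
  exact ⟨_, hrot.isLeast.1, _, Finset.mem_insert_self _ _, hspan.lt, herase⟩

theorem exists_isRotationSpan (hZ : IsStaircasePath r n Z) {a : ℕ} (ha : a < n)
    (hlt : Z a < Z (a + 1)) : ∃ b, IsRotationSpan r n Z a b := by
  have htop : a < n ∧ slack r Z n ≤ slack r Z a :=
    ⟨ha, by simp [slack, hZ.eq_top (n + 1) n.lt_succ_self]⟩
  have hex : ∃ k, a < k ∧ slack r Z k ≤ slack r Z a := ⟨n, htop⟩
  exact ⟨Nat.find hex, (Nat.find_spec hex).1, Nat.find_min' hex htop, hlt, (Nat.find_spec hex).2,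
    fun k hak hk => not_le.1 fun hle => Nat.find_min hex hk ⟨hak, hle⟩⟩

end IsStaircasePath

namespace IsStaircaseTree

variable {a b : ℕ}

theorem isLeast_of_erase_eq_erase (hr : Monotone r) (hT : IsStaircaseTree r n T)
    (hT' : IsStaircaseTree r n T') {e z : ℕ} (he : (e, a) ∈ T) (hab : a < b)
    (h : T.erase (e, a) = T'.erase (z, b)) : IsLeast {w | (w, a) ∈ T} e := by
  obtain ⟨w, hw⟩ := exists_isLeast_row he
  obtain rfl | hwe := (hw.2 he).eq_or_lt
  · exact hw
  have hwT' : (w, a) ∈ T' := mem_right_of_erase_eq_erase h hw.1 (by simp [hwe.ne])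
  refine absurd (hT'.mem_of_lt hr hwT' hwe (hT.col_le he) fun k hka hk => ?_)
    (notMem_right_of_erase_eq_erase h (by simp [hab.ne]))
  obtain ⟨hek, v, hve, hv⟩ := mem_innerOf.1 hk
  have hkb : k ≠ b := (hka.trans hab).ne
  have hek' : e ∈ innerOf T k := mem_innerOf.2
    ⟨mem_right_of_erase_eq_erase h.symm hek (by simp [hkb]), v, hve,
      mem_right_of_erase_eq_erase h.symm hv (by simp [hkb])⟩
  exact hka.not_ge (hT.le_of_mem_innerOf hek' he)

theorem fst_eq_of_erase_eq_erase (hr : Monotone r) (hT : IsStaircaseTree r n T)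
    (hT' : IsStaircaseTree r n T') {e z z' c : ℕ} (hrot : IsRotatable r T e z a c) (hab : a < b)
    (h : T.erase (e, a) = T'.erase (z', b)) : z' = z := by
  have hinner := hrot.mem_innerOf
  have hez := hrot.isLeast_right.1.2
  obtain ⟨k, -, hk⟩ := hT'.exists_mem_innerOf hr (by omega : 1 ≤ z)
    ((hT.col_le (mem_innerOf.1 hinner).1).trans
      (hr (hT.height_le hrot.isLeast.1)))
  by_contra hne
  obtain ⟨hzk', w, hwz, hw'⟩ := mem_innerOf.1 hk
  have hzk : (z, k) ∈ T := mem_right_of_erase_eq_erase h.symm hzk' (by simp [Ne.symm hne])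
  have hka : k ≤ a := hT.le_of_mem_innerOf hinner hzk
  have hw : (w, k) ∈ T :=
    mem_right_of_erase_eq_erase h.symm hw' (by simp [(hka.trans_lt hab).ne])
  obtain rfl := hT.eq_of_mem_innerOf (mem_innerOf.2 ⟨hzk, w, hwz, hw⟩) hinner
  have hew : e ≠ w := by
    rintro rfl
    exact notMem_right_of_erase_eq_erase h (by simp [hab.ne]) hw'
  exact hwz.not_ge (hrot.isLeast_right.2 ⟨hw, (hrot.isLeast.2 hw).lt_of_ne hew⟩)

theorem snd_eq_of_erase_eq_erase (hr : Monotone r) (hT : IsStaircaseTree r n T)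
    (hT' : IsStaircaseTree r n T') {z : ℕ} (hz : (z, a) ∈ T) (hz' : (z, b) ∈ T')
    (h : T.erase (z, a) = T'.erase (z, b)) : a = b := by
  wlog hab : a < b generalizing T T' a b
  · by_contra hne
    exact hne (this hT' hT hz' hz h.symm (by omega)).symm
  exfalso
  obtain ⟨w, hw⟩ := hT'.exists_isLeast hr (hT.height_le hz)
  have hwa : (w, a) ∈ T := mem_right_of_erase_eq_erase h.symm hw.1 (by simp [hab.ne])
  have hwz : w ≠ z := by
    rintro rfl
    exact notMem_right_of_erase_eq_erase h (by simp [hab.ne]) hw.1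
  rcases hwz.lt_or_gt with hwz | hzw
  · exact (hT'.lt_of_lt hw.1 hz' hwz hab).not_ge (hT.col_le hz)
  have hinner : w ∈ innerOf T a := mem_innerOf.2 ⟨hwa, z, hzw, hz⟩
  obtain ⟨k, -, hk⟩ := hT'.exists_mem_innerOf hr (by omega : 1 ≤ w)
    ((hT.col_le hwa).trans (hr (hT.height_le hz)))
  have hka : k ≤ a := hT.le_of_mem_innerOf hinner
    (mem_right_of_erase_eq_erase h.symm (mem_innerOf.1 hk).1 (by simp [hzw.ne']))
  obtain rfl : k = a := le_antisymm hka (hT'.le_of_mem_innerOf hk hw.1)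
  obtain ⟨-, v, hvw, hv⟩ := mem_innerOf.1 hk
  exact hvw.not_ge (hw.2 hv)

end IsStaircaseTree

namespace IsStaircasePath

theorem isPathCover_of_isUpFlip (hr : Monotone r) (hZ : IsStaircasePath r n Z) {Z' : ℕ → ℕ}
    (hZ' : IsStaircasePath r n Z') (h : IsUpFlip (treeOf r n Z) (treeOf r n Z')) :
    IsPathCover r n Z Z' := by
  obtain ⟨⟨e, a⟩, he, ⟨z, b⟩, hz, hab : a < b, herase⟩ := h
  have hT := hZ.isStaircaseTree_treeOf hr
  have hT' := hZ'.isStaircaseTree_treeOf hr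
  have han : a < n := hab.trans_le (hT'.height_le hz)
  have hlt : Z a < Z (a + 1) := by
    have hcard := card_rowOf_add_of_erase_eq_erase he hz herase a
    rw [if_neg hab.ne, if_pos rfl, hT'.card_rowOf hr han.le] at hcard
    have := hZ.card_rowOf_treeOf hr han.le
    omega
  obtain ⟨c, hspan⟩ := hZ.exists_isRotationSpan han hlt
  have hrot := hZ.isRotatable_treeOf hr hspan
  obtain rfl := hrot.isLeast.unique (hT.isLeast_of_erase_eq_erase hr hT' he hab herase)
  obtain rfl := hT.fst_eq_of_erase_eq_erase hr hT' hrot hab herase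
  obtain rfl := (hrot.isStaircaseTree_insert_erase hr hT).snd_eq_of_erase_eq_erase hr hT'
    (Finset.mem_insert_self _ _) hz ((hrot.erase_insert_erase hT).trans herase)
  have hpath := pathOf_eq_lowerOn_of_erase_eq_erase hr hT hT' he hz hab herase
  rw [hZ.pathOf_treeOf hr, hZ'.pathOf_treeOf hr] at hpath
  exact ⟨_, _, hspan, hpath⟩

theorem isPathCover_iff (hr : Monotone r) (hZ : IsStaircasePath r n Z) {Z' : ℕ → ℕ}
    (hZ' : IsStaircasePath r n Z') :
    IsPathCover r n Z Z' ↔ IsUpFlip (treeOf r n Z) (treeOf r n Z') :=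
  ⟨hZ.isUpFlip_of_isPathCover hr, hZ.isPathCover_of_isUpFlip hr hZ'⟩

end IsStaircasePath

end Flips

section Pipes

/-- The adjacent transposition labelling the cell `p` of a shape with top row `n`. -/
def cellSwap (n : ℕ) (p : ℕ × ℕ) : Equiv.Perm ℕ :=
  Equiv.swap (p.1 + (n - p.2) + 1) (p.1 + (n - p.2) + 2)

/-- The first `x` cells of row `y`, from left to right. -/
def rowCells (y x : ℕ) : List (ℕ × ℕ) := (List.range x).map fun j => (j, y)

/-- The cells of the rows below row `N` in reading order, row `y` having the columns `0, …, r y`. -/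
def cells (r : ℕ → ℕ) (N : ℕ) : List (ℕ × ℕ) :=
  (List.range N).flatMap fun y => rowCells y (r y + 1)

/-- The product of the labels of the cells in `L` outside `T`: the permutation of the pipe dream
with elbows at `T` and crossings at the other cells of `L`. -/
def crossingProd (n : ℕ) (T : Finset (ℕ × ℕ)) (L : List (ℕ × ℕ)) : Equiv.Perm ℕ :=
  ((L.filter (· ∉ T)).map (cellSwap n)).prod

/-- The name of the pipe entering the cell `(j, y)` from below. -/
def vertPipe (r : ℕ → ℕ) (n : ℕ) (T : Finset (ℕ × ℕ)) (y j : ℕ) : ℕ :=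
  crossingProd n T (cells r y) (n + 2 - y + j)

/-- The name of the pipe entering the cell `(x, y)` from the left. -/
def horizPipe (r : ℕ → ℕ) (n : ℕ) (T : Finset (ℕ × ℕ)) (y x : ℕ) : ℕ :=
  crossingProd n T (cells r y ++ rowCells y x) (n + 1 - y + x)

/-- The number of pipes with name at most `v` entering row `y` from below in the first `x`
columns. -/
def smallCount (r : ℕ → ℕ) (n : ℕ) (T : Finset (ℕ × ℕ)) (v y x : ℕ) : ℕ :=
  Nat.count (fun j => vertPipe r n T y j ≤ v) x

variable {r : ℕ → ℕ} {n : ℕ} {T : Finset (ℕ × ℕ)}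

theorem mem_rowCells {x y y' N : ℕ} : (x, y') ∈ rowCells y N ↔ x < N ∧ y = y' := by
  simp [rowCells]

theorem mem_cells {x y N : ℕ} : (x, y) ∈ cells r N ↔ y < N ∧ x ≤ r y := by
  simp only [cells, List.mem_flatMap, List.mem_range, mem_rowCells, Nat.lt_succ_iff]
  exact ⟨fun ⟨_, hy, hx, h⟩ => h ▸ ⟨hy, hx⟩, fun ⟨hy, hx⟩ => ⟨y, hy, hx, rfl⟩⟩

theorem rowCells_succ (y x : ℕ) : rowCells y (x + 1) = rowCells y x ++ [(x, y)] := by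
  simp [rowCells, List.range_succ]

theorem cells_succ (r : ℕ → ℕ) (N : ℕ) : cells r (N + 1) = cells r N ++ rowCells N (r N + 1) := by
  simp [cells, List.range_succ]

theorem crossingProd_append (n : ℕ) (T : Finset (ℕ × ℕ)) (L L' : List (ℕ × ℕ)) :
    crossingProd n T (L ++ L') = crossingProd n T L * crossingProd n T L' := by
  simp [crossingProd]

theorem crossingProd_singleton_of_mem {p : ℕ × ℕ} (hp : p ∈ T) : crossingProd n T [p] = 1 := by
  simp [crossingProd, hp]

theorem crossingProd_singleton_of_notMem {p : ℕ × ℕ} (hp : p ∉ T) :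
    crossingProd n T [p] = cellSwap n p := by
  simp [crossingProd, hp]

theorem crossingProd_apply_of_forall {L : List (ℕ × ℕ)} {i : ℕ}
    (h : ∀ p ∈ L, i ≠ p.1 + (n - p.2) + 1 ∧ i ≠ p.1 + (n - p.2) + 2) :
    crossingProd n T L i = i := by
  refine (MulAction.stabilizer (Equiv.Perm ℕ) i).list_prod_mem fun s hs => ?_
  obtain ⟨p, hp, rfl⟩ := List.mem_map.1 hs
  obtain ⟨h₁, h₂⟩ := h p (List.mem_of_mem_filter hp)
  exact Equiv.swap_apply_of_ne_of_ne h₁ h₂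

theorem crossingProd_cells_apply {y i : ℕ} (hi : i + y ≤ n + 1) :
    crossingProd n T (cells r y) i = i := by
  refine crossingProd_apply_of_forall fun ⟨x, k⟩ hp => ?_
  have := (mem_cells.1 hp).1
  dsimp only
  omega

/- The pipes named at most `n + 1 - y` enter the shape from the left in row `y` or above. -/
theorem lt_vertPipe {y : ℕ} (hy : y ≤ n + 1) (j : ℕ) : n + 1 - y < vertPipe r n T y j := by
  by_contra! hle
  have hfix := crossingProd_cells_apply (r := r) (T := T) (n := n) (y := y)
    (i := vertPipe r n T y j) (by omega)
  have := (crossingProd n T (cells r y)).injective hfix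
  omega

theorem crossingProd_cells_append_apply {y x i : ℕ} (hy : y ≤ n) (hi : n + 1 - y + x < i) :
    crossingProd n T (cells r y ++ rowCells y x) i = crossingProd n T (cells r y) i := by
  rw [crossingProd_append, Equiv.Perm.mul_apply]
  congr 1
  refine crossingProd_apply_of_forall fun ⟨j, k⟩ hp => ?_
  obtain ⟨hj, rfl⟩ := mem_rowCells.1 hp
  dsimp only
  omega

theorem vertPipe_eq {y j : ℕ} (hy : y ≤ n) :
    vertPipe r n T y j = crossingProd n T (cells r y ++ rowCells y j) (n + 2 - y + j) :=
  (crossingProd_cells_append_apply hy (by omega)).symm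

theorem vertPipe_succ_eq {y j : ℕ} (hy : y ≤ n) (hj : j ≤ r y) :
    vertPipe r n T (y + 1) j =
      crossingProd n T (cells r y ++ rowCells y (j + 1)) (n + 1 - y + j) := by
  obtain ⟨d, hd⟩ := Nat.exists_eq_add_of_le hj
  have hsplit : rowCells y (r y + 1) =
      rowCells y (j + 1) ++ (List.range d).map fun i => (j + 1 + i, y) := by
    rw [hd, rowCells, show j + d + 1 = j + 1 + d by omega, List.range_add]
    simp [rowCells]
  have hfix : crossingProd n T ((List.range d).map fun i => (j + 1 + i, y)) (n + 1 - y + j) =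
      n + 1 - y + j := by
    refine crossingProd_apply_of_forall fun p hp => ?_
    obtain ⟨i, -, rfl⟩ := List.mem_map.1 hp
    dsimp only
    omega
  rw [vertPipe, cells_succ, hsplit, ← List.append_assoc, crossingProd_append, Equiv.Perm.mul_apply,
    show n + 2 - (y + 1) + j = n + 1 - y + j by omega, hfix]

theorem horizPipe_zero {y : ℕ} (hy : y ≤ n) : horizPipe r n T y 0 = n + 1 - y := by
  rw [horizPipe, rowCells, List.range_zero, List.map_nil, List.append_nil, add_zero,
    crossingProd_cells_apply (by omega)]

section Cell

variable {x y : ℕ}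

theorem horizPipe_succ_of_mem (hy : y ≤ n) (h : (x, y) ∈ T) :
    horizPipe r n T y (x + 1) = vertPipe r n T y x := by
  rw [horizPipe, vertPipe_eq hy, rowCells_succ, ← List.append_assoc, crossingProd_append,
    crossingProd_singleton_of_mem h, mul_one, show n + 1 - y + (x + 1) = n + 2 - y + x by omega]

theorem vertPipe_succ_of_mem (hy : y ≤ n) (hx : x ≤ r y) (h : (x, y) ∈ T) :
    vertPipe r n T (y + 1) x = horizPipe r n T y x := by
  rw [vertPipe_succ_eq hy hx, rowCells_succ, ← List.append_assoc, crossingProd_append,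
    crossingProd_singleton_of_mem h, mul_one, horizPipe]

theorem cellSwap_eq (hy : y ≤ n) :
    cellSwap n (x, y) = Equiv.swap (n + 1 - y + x) (n + 2 - y + x) := by
  rw [cellSwap]
  congr 1 <;> dsimp only <;> omega

theorem horizPipe_succ_of_notMem (hy : y ≤ n) (h : (x, y) ∉ T) :
    horizPipe r n T y (x + 1) = horizPipe r n T y x := by
  rw [horizPipe, rowCells_succ, ← List.append_assoc, crossingProd_append,
    crossingProd_singleton_of_notMem h, cellSwap_eq hy, Equiv.Perm.mul_apply,
    show n + 1 - y + (x + 1) = n + 2 - y + x by omega, Equiv.swap_apply_right, horizPipe]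

theorem vertPipe_succ_of_notMem (hy : y ≤ n) (hx : x ≤ r y) (h : (x, y) ∉ T) :
    vertPipe r n T (y + 1) x = vertPipe r n T y x := by
  rw [vertPipe_succ_eq hy hx, rowCells_succ, ← List.append_assoc, crossingProd_append,
    crossingProd_singleton_of_notMem h, cellSwap_eq hy, Equiv.Perm.mul_apply,
    Equiv.swap_apply_left, vertPipe_eq hy]

end Cell

theorem horizPipe_eq_of_forall_notMem {y x x' : ℕ} (hy : y ≤ n) (hx : x ≤ x')
    (h : ∀ j, x ≤ j → j < x' → (j, y) ∉ T) : horizPipe r n T y x' = horizPipe r n T y x := by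
  induction x', hx using Nat.le_induction with
  | base => rfl
  | succ x' hx ih =>
    rw [horizPipe_succ_of_notMem hy (h x' hx x'.lt_succ_self)]
    exact ih fun j hj hj' => h j hj (hj'.trans x'.lt_succ_self)

theorem horizPipe_of_isLeast {y e : ℕ} (he : IsLeast {w | (w, y) ∈ T} e) (hy : y ≤ n) :
    horizPipe r n T y e = n + 1 - y := by
  rw [horizPipe_eq_of_forall_notMem hy e.zero_le fun j _ hj hjT => hj.not_ge (he.2 hjT),
    horizPipe_zero hy]

theorem smallCount_succ (v y x : ℕ) : smallCount r n T v y (x + 1) =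
    smallCount r n T v y x + if vertPipe r n T y x ≤ v then 1 else 0 :=
  Nat.count_succ _ _

/- In the first `x` columns of row `y`, the pipes entering from below together with the pipe
`n + 1 - y` entering from the left are those leaving upwards and the one leaving to the right. -/
theorem smallCount_succ_add {v x y : ℕ} (hy : y ≤ n) (hv : n + 1 - y ≤ v) (hx : x ≤ r y + 1) :
    smallCount r n T v (y + 1) x + (if horizPipe r n T y x ≤ v then 1 else 0) =
      smallCount r n T v y x + 1 := by
  induction x with
  | zero => simp [smallCount, horizPipe_zero hy, hv]
  | succ x ih =>
    have hxr : x ≤ r y := Nat.succ_le_succ_iff.1 hx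
    have := ih (by omega)
    rw [smallCount_succ, smallCount_succ]
    by_cases h : (x, y) ∈ T
    · rw [vertPipe_succ_of_mem hy hxr h, horizPipe_succ_of_mem hy h]
      omega
    · rw [vertPipe_succ_of_notMem hy hxr h, horizPipe_succ_of_notMem hy h]
      omega

theorem smallCount_succ_of_mem {v x y : ℕ} (hy : y ≤ n) (hv : n + 1 - y ≤ v) (hx : x ≤ r y)
    (h : (x, y) ∈ T) : smallCount r n T v (y + 1) (x + 1) = smallCount r n T v y x + 1 := by
  have := smallCount_succ_add (T := T) hy hv (Nat.add_le_add_right hx 1)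
  rw [horizPipe_succ_of_mem hy h, smallCount_succ v y] at this
  omega

theorem smallCount_le_of_le (hr : Monotone r) {v x y y' : ℕ} (hyy' : y ≤ y') (hy' : y' ≤ n + 1)
    (hv : n + 1 - y ≤ v) (hx : x ≤ r y + 1) :
    smallCount r n T v y x ≤ smallCount r n T v y' x := by
  induction y', hyy' using Nat.le_induction with
  | base => rfl
  | succ k hk ih =>
    have := smallCount_succ_add (T := T) (Nat.succ_le_succ_iff.1 hy') (v := v) (by omega)
      (hx.trans (Nat.add_le_add_right (hr hk) 1))
    have := ih (by omega)
    split_ifs at * <;> omega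

theorem two_le_smallCount (hr : Monotone r) {x₁ y₁ x₂ y₂ : ℕ} (h₁ : (x₁, y₁) ∈ T)
    (h₂ : (x₂, y₂) ∈ T) (hx : x₁ < x₂) (hy : y₁ < y₂) (hy₂ : y₂ ≤ n) (hx₂ : x₂ ≤ r y₁) :
    2 ≤ smallCount r n T (n + 1 - y₁) (n + 1) (x₂ + 1) := by
  have hx₂y₂ : x₂ ≤ r y₂ := hx₂.trans (hr hy.le)
  calc 2 ≤ smallCount r n T (n + 1 - y₁) (y₁ + 1) (x₁ + 1) + 1 := by
        rw [smallCount_succ_of_mem (by omega) le_rfl (by omega) h₁]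
        omega
    _ ≤ smallCount r n T (n + 1 - y₁) y₂ (x₁ + 1) + 1 := by
        have := hr (Nat.le_add_right y₁ 1)
        refine Nat.add_le_add_right (smallCount_le_of_le (y := y₁ + 1) hr hy ?_ ?_ ?_) 1 <;> omega
    _ ≤ smallCount r n T (n + 1 - y₁) y₂ x₂ + 1 := Nat.add_le_add_right (Nat.count_monotone _ hx) 1
    _ = smallCount r n T (n + 1 - y₁) (y₂ + 1) (x₂ + 1) :=
        (smallCount_succ_of_mem hy₂ (by omega) hx₂y₂ h₂).symm
    _ ≤ smallCount r n T (n + 1 - y₁) (n + 1) (x₂ + 1) :=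
        smallCount_le_of_le hr (by omega) le_rfl (by omega)
          (Nat.add_le_add_right (hx₂y₂.trans (hr y₂.le_succ)) 1)

/-- Above row `y₁`, the only pipe named at most `n + 1 - y₁` in the columns of row `y₁` runs, when
it enters row `y`, in the leftmost column `c` used by `T` in the rows from `y₁` to `y - 1`. -/
structure IsLonePipe (r : ℕ → ℕ) (n : ℕ) (T : Finset (ℕ × ℕ)) (y₁ y c : ℕ) : Prop where
  exists_mem : ∃ k, y₁ ≤ k ∧ k < y ∧ (c, k) ∈ T
  le_of_mem : ∀ {w k}, y₁ ≤ k → k < y → (w, k) ∈ T → c ≤ w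
  le_col : c ≤ r y₁
  vertPipe_le : vertPipe r n T y c ≤ n + 1 - y₁
  smallCount_le : smallCount r n T (n + 1 - y₁) y (r y₁ + 1) ≤ 1

namespace IsStaircaseTree

variable {y₁ y c e : ℕ}

theorem isLonePipe_base (hT : IsStaircaseTree r n T) (hy : y₁ ≤ n)
    (he : IsLeast {w | (w, y₁) ∈ T} e) : IsLonePipe r n T y₁ (y₁ + 1) e where
  exists_mem := ⟨y₁, le_rfl, y₁.lt_succ_self, he.1⟩
  le_of_mem hk hk' hw := he.2 ((le_antisymm hk (Nat.lt_succ_iff.1 hk')) ▸ hw)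
  le_col := hT.col_le he.1
  vertPipe_le := by
    rw [vertPipe_succ_of_mem hy (hT.col_le he.1) he.1, horizPipe_of_isLeast he hy]
  smallCount_le := by
    have hzero : smallCount r n T (n + 1 - y₁) y₁ (r y₁ + 1) = 0 :=
      (Nat.count_iff_forall_not).2 fun j _ => (lt_vertPipe (by omega) j).not_ge
    have := smallCount_succ_add (T := T) hy le_rfl (le_refl (r y₁ + 1))
    omega

theorem mem_of_isLonePipe (hr : Monotone r) (hT : IsStaircaseTree r n T)
    (h : IsLonePipe r n T y₁ y c) (he : (e, y) ∈ T) (hec : e ≤ c) : (c, y) ∈ T := by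
  obtain ⟨k, hk, hky, hck⟩ := h.exists_mem
  rcases hec.eq_or_lt with rfl | hec
  · exact he
  refine hT.mem_of_lt hr he hec (h.le_col.trans (hr (hk.trans hky.le))) fun i hiy hi => ?_
  have hki : k ≤ i := hT.le_of_mem_innerOf hi hck
  obtain ⟨-, w, hwc, hw⟩ := mem_innerOf.1 hi
  exact hwc.not_ge (h.le_of_mem (hk.trans hki) hiy hw)

theorem isLonePipe_succ_of_le (hr : Monotone r) (hT : IsStaircaseTree r n T) (hy : y ≤ n)
    (h : IsLonePipe r n T y₁ y c) (he : IsLeast {w | (w, y) ∈ T} e) (hec : e ≤ c) :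
    IsLonePipe r n T y₁ (y + 1) e := by
  obtain ⟨k, hk, hky, hck⟩ := h.exists_mem
  have hcy := hT.mem_of_isLonePipe hr h he.1 hec
  refine ⟨⟨y, by omega, y.lt_succ_self, he.1⟩, ?_, hec.trans h.le_col, ?_, ?_⟩
  · intro w i hi hiy hw
    rcases (Nat.lt_succ_iff.1 hiy).eq_or_lt with rfl | hiy
    exacts [he.2 hw, hec.trans (h.le_of_mem hi hiy hw)]
  · rw [vertPipe_succ_of_mem hy (hT.col_le he.1) he.1, horizPipe_of_isLeast he hy]
    omega
  · have hout : horizPipe r n T y (r y₁ + 1) = vertPipe r n T y c := by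
      rw [← horizPipe_succ_of_mem hy hcy]
      have hcr : c + 1 ≤ r y₁ + 1 := Nat.add_le_add_right h.le_col 1
      refine horizPipe_eq_of_forall_notMem hy hcr fun j hcj hj hjT => ?_
      have := hT.lt_of_lt hck hjT hcj hky
      have := hr hk
      omega
    have := smallCount_succ_add (T := T) (v := n + 1 - y₁) hy (by omega)
      (Nat.add_le_add_right (hr (hk.trans hky.le)) 1)
    rw [hout, if_pos h.vertPipe_le] at this
    have := h.smallCount_le
    omega

theorem isLonePipe_succ_of_lt (hr : Monotone r) (hT : IsStaircaseTree r n T) (hy : y ≤ n)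
    (h : IsLonePipe r n T y₁ y c) (he : IsLeast {w | (w, y) ∈ T} e) (hce : c < e) :
    IsLonePipe r n T y₁ (y + 1) c := by
  obtain ⟨k, hk, hky, hck⟩ := h.exists_mem
  have hyr : r y₁ ≤ r y := hr (hk.trans hky.le)
  have hre : r y₁ < e := (hr hk).trans_lt (hT.lt_of_lt hck he.1 hce hky)
  refine ⟨⟨k, hk, hky.trans y.lt_succ_self, hck⟩, ?_, h.le_col, ?_, ?_⟩
  · intro w i hi hiy hw
    rcases (Nat.lt_succ_iff.1 hiy).eq_or_lt with rfl | hiy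
    exacts [hce.le.trans (he.2 hw), h.le_of_mem hi hiy hw]
  · rw [vertPipe_succ_of_notMem hy (h.le_col.trans hyr) fun hc => hce.not_ge (he.2 hc)]
    exact h.vertPipe_le
  · have hout : horizPipe r n T y (r y₁ + 1) = n + 1 - y := by
      rw [horizPipe_eq_of_forall_notMem hy (Nat.zero_le _), horizPipe_zero hy]
      intro j _ hj hjT
      have := he.2 hjT
      omega
    have := smallCount_succ_add (T := T) (v := n + 1 - y₁) hy (by omega)
      (Nat.add_le_add_right hyr 1)
    rw [hout, if_pos (by omega)] at this
    have := h.smallCount_le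
    omega

theorem exists_isLonePipe (hr : Monotone r) (hT : IsStaircaseTree r n T) (hy₁ : y₁ < y)
    (hy : y ≤ n + 1) : ∃ c, IsLonePipe r n T y₁ y c := by
  induction y, hy₁ using Nat.le_induction with
  | base =>
    obtain ⟨e, he⟩ := hT.exists_isLeast hr (Nat.succ_le_succ_iff.1 hy)
    exact ⟨e, hT.isLonePipe_base (Nat.succ_le_succ_iff.1 hy) he⟩
  | succ y _ ih =>
    obtain ⟨c, hc⟩ := ih (by omega)
    obtain ⟨e, he⟩ := hT.exists_isLeast hr (Nat.succ_le_succ_iff.1 hy)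
    rcases le_or_gt e c with hec | hce
    · exact ⟨e, hT.isLonePipe_succ_of_le hr (Nat.succ_le_succ_iff.1 hy) hc he hec⟩
    · exact ⟨c, hT.isLonePipe_succ_of_lt hr (Nat.succ_le_succ_iff.1 hy) hc he hce⟩

theorem isLonePipe_zero (hr : Monotone r) (hT : IsStaircaseTree r n T) (hy₁ : y₁ ≤ n) :
    IsLonePipe r n T y₁ (n + 1) 0 := by
  obtain ⟨c, hc⟩ := hT.exists_isLonePipe hr (Nat.lt_succ_iff.2 hy₁) le_rfl
  obtain rfl := Nat.le_zero.1 (hc.le_of_mem hy₁ n.lt_succ_self (hT.zero_mem hr))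
  exact hc

end IsStaircaseTree

end Pipes

section TreeProduct

/-- The common Rothe diagram of the permutations of the pipe dreams of all trees in the shape with
row ends `r` and top row `n`. -/
def shapeDiagram (r : ℕ → ℕ) (n : ℕ) : Set (ℕ × ℕ) :=
  {q | ∃ y < n, q.2 = n + 1 - y ∧ 2 ≤ q.1 ∧ q.1 ≤ r y + 1}

variable {r : ℕ → ℕ} {n : ℕ} {T : Finset (ℕ × ℕ)}

theorem shapeDiagram_eq_image : shapeDiagram r n =
    (fun s : (_ : ℕ) × ℕ => (s.2 + 2, n + 1 - s.1)) ''
      ((Finset.range n).sigma fun y => Finset.range (r y) : Finset _) := by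
  ext ⟨p, v⟩
  simp only [shapeDiagram, Set.mem_ofPred_eq, Set.mem_image, Finset.mem_coe, Finset.mem_sigma,
    Finset.mem_range, Prod.mk.injEq]
  constructor
  · rintro ⟨y, hy, rfl, hp, hpr⟩
    exact ⟨⟨y, p - 2⟩, ⟨hy, by dsimp only; omega⟩, by dsimp only; omega, rfl⟩
  · rintro ⟨⟨y, x⟩, ⟨hy, hx⟩, rfl, rfl⟩
    exact ⟨y, hy, rfl, by omega, by dsimp only at hx ⊢; omega⟩

theorem encard_shapeDiagram : (shapeDiagram r n).encard = ∑ k ∈ Finset.range n, r k := by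
  rw [shapeDiagram_eq_image, Set.InjOn.encard_image, Set.encard_coe_eq_coe_finsetCard,
    Finset.card_sigma]
  · simp only [Finset.card_range]
  · rintro ⟨a, b⟩ hs ⟨c, d⟩ hs' h
    simp only [Finset.coe_sigma, Set.mem_sigma_iff, Finset.mem_coe, Finset.mem_range] at hs hs'
    obtain ⟨hbd, hac⟩ := Prod.mk.inj h
    dsimp only at hbd hac
    obtain rfl : a = c := by omega
    obtain rfl : b = d := by omega
    rfl

theorem pairwise_cells (r : ℕ → ℕ) (N : ℕ) :
    (cells r N).Pairwise fun p q => p.2 < q.2 ∨ p.2 = q.2 ∧ p.1 < q.1 := by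
  refine List.pairwise_flatMap.2 ⟨fun y _ => ?_, List.pairwise_lt_range.imp fun hy => ?_⟩
  · exact List.pairwise_map.2 (List.pairwise_lt_range.imp fun hx => Or.inr ⟨rfl, hx⟩)
  · rintro ⟨x, _⟩ hp ⟨x', _⟩ hq
    obtain ⟨-, rfl⟩ := mem_rowCells.1 hp
    obtain ⟨-, rfl⟩ := mem_rowCells.1 hq
    exact Or.inl hy

theorem nodup_cells (r : ℕ → ℕ) (N : ℕ) : (cells r N).Nodup :=
  (pairwise_cells r N).imp fun h => by rintro rfl; omega

theorem length_cells (r : ℕ → ℕ) (N : ℕ) :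
    (cells r N).length = ∑ k ∈ Finset.range N, (r k + 1) := by
  induction N with
  | zero => rfl
  | succ N ih => simp [cells_succ, Finset.sum_range_succ, ih, rowCells]

theorem encard_inversions_crossingProd_le (L : List (ℕ × ℕ)) :
    (inversions (crossingProd n T L)).encard ≤ (L.filter (· ∉ T)).length := by
  rw [← List.length_map (cellSwap n)]
  refine encard_inversions_prod_le fun s hs => ?_
  obtain ⟨p, -, rfl⟩ := List.mem_map.1 hs
  exact ⟨_, rfl⟩

theorem vertPipe_top (j : ℕ) :
    vertPipe r n T (n + 1) j = crossingProd n T (cells r (n + 1)) (j + 1) := by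
  rw [vertPipe, show n + 2 - (n + 1) + j = j + 1 by omega]

namespace IsStaircaseTree

theorem mem_cells (hT : IsStaircaseTree r n T) : ∀ p ∈ T, p ∈ cells r (n + 1) := fun _ hp =>
  _root_.mem_cells.2 ⟨Nat.lt_succ_iff.2 (hT.height_le hp), hT.col_le hp⟩

theorem length_crossings (hT : IsStaircaseTree r n T) :
    ((cells r (n + 1)).filter (· ∉ T)).length = ∑ k ∈ Finset.range n, r k := by
  have h := length_filter_notMem_add_card (nodup_cells r (n + 1)) hT.mem_cells
  rw [hT.card_eq, length_cells, Finset.sum_add_distrib, Finset.sum_range_succ r] at h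
  simp only [Finset.sum_const, Finset.card_range, smul_eq_mul, mul_one] at h
  omega

theorem crossingProd_one (hr : Monotone r) (hT : IsStaircaseTree r n T) :
    crossingProd n T (cells r (n + 1)) 1 = 1 := by
  have hle := (hT.isLonePipe_zero hr le_rfl).vertPipe_le
  have hlt := lt_vertPipe (r := r) (T := T) (le_refl (n + 1)) 0
  rw [vertPipe_top, zero_add] at hle hlt
  omega

theorem lt_crossingProd (hr : Monotone r) (hT : IsStaircaseTree r n T) {y p : ℕ} (hy : y ≤ n)
    (hp : 2 ≤ p) (hpr : p ≤ r y + 1) : n + 1 - y < crossingProd n T (cells r (n + 1)) p := by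
  obtain ⟨j, rfl⟩ := Nat.exists_eq_add_of_le hp
  have h := hT.isLonePipe_zero hr hy
  rw [show 2 + j = j + 1 + 1 by omega, ← vertPipe_top]
  by_contra! hle
  have hfirst : 1 ≤ smallCount r n T (n + 1 - y) (n + 1) (j + 1) :=
    calc 1 = smallCount r n T (n + 1 - y) (n + 1) 1 := by
          rw [smallCount_succ, if_pos h.vertPipe_le, smallCount, Nat.count_zero]
      _ ≤ _ := Nat.count_monotone _ (by omega)
  have hboth : smallCount r n T (n + 1 - y) (n + 1) (j + 1 + 1) ≤ 1 :=
    (Nat.count_monotone _ (by omega)).trans h.smallCount_le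
  rw [smallCount_succ, if_pos hle] at hboth
  omega

theorem shapeDiagram_subset (hr : Monotone r) (hT : IsStaircaseTree r n T) :
    shapeDiagram r n ⊆ rotheDiagram (crossingProd n T (cells r (n + 1))) := by
  rintro ⟨p, v⟩ ⟨y, hy, rfl : v = n + 1 - y, hp, hpr⟩
  dsimp only at hp hpr
  set u := crossingProd n T (cells r (n + 1)) with hu
  refine ⟨hT.lt_crossingProd hr hy.le hp hpr, ?_⟩
  by_contra! hle
  obtain ⟨q, hq⟩ := u.surjective (n + 1 - y)
  rw [← hq, Equiv.symm_apply_apply] at hle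
  dsimp only at hle
  have hq₀ : q ≠ 0 := by
    rintro rfl
    rw [hu, crossingProd_cells_apply (by omega)] at hq
    omega
  have hq₁ : q ≠ 1 := by
    rintro rfl
    rw [hu, hT.crossingProd_one hr] at hq
    omega
  exact (hT.lt_crossingProd hr hy.le (by omega) (hle.trans hpr)).ne' hq

theorem rotheDiagram_crossingProd (hr : Monotone r) (hT : IsStaircaseTree r n T) :
    rotheDiagram (crossingProd n T (cells r (n + 1))) = shapeDiagram r n := by
  have hle : (rotheDiagram (crossingProd n T (cells r (n + 1)))).encard ≤
      (shapeDiagram r n).encard := by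
    rw [encard_rotheDiagram, encard_shapeDiagram, ← hT.length_crossings]
    exact encard_inversions_crossingProd_le _
  have hfin : (shapeDiagram r n).Finite := by
    rw [shapeDiagram_eq_image]
    exact (Finset.finite_toSet _).image _
  exact (hfin.eq_of_subset_of_encard_le (hT.shapeDiagram_subset hr) hle).symm

theorem crossingProd_eq {T' : Finset (ℕ × ℕ)} (hr : Monotone r) (hT : IsStaircaseTree r n T)
    (hT' : IsStaircaseTree r n T') :
    crossingProd n T (cells r (n + 1)) = crossingProd n T' (cells r (n + 1)) :=
  rotheDiagram_injective
    ((hT.rotheDiagram_crossingProd hr).trans (hT'.rotheDiagram_crossingProd hr).symm)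

theorem lenInv_crossingProd (hr : Monotone r) (hT : IsStaircaseTree r n T) :
    lenInv (crossingProd n T (cells r (n + 1))) = ∑ k ∈ Finset.range n, r k := by
  change (inversions _).encard.toNat = _
  rw [← encard_rotheDiagram, hT.rotheDiagram_crossingProd hr, encard_shapeDiagram]
  exact ENat.toNat_natCast _

/- By `two_le_smallCount`, an incompatible pair in `S` is visible in the permutation alone. -/
theorem of_crossingProd_eq (hr : Monotone r) (hT : IsStaircaseTree r n T) {S : Finset (ℕ × ℕ)}
    (hS : ∀ p ∈ S, p ∈ cells r (n + 1)) (hcard : S.card = T.card)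
    (h : crossingProd n S (cells r (n + 1)) = crossingProd n T (cells r (n + 1))) :
    IsStaircaseTree r n S where
  height_le {x y} hp := Nat.lt_succ_iff.1 (_root_.mem_cells.1 (hS _ hp)).1
  col_le {x y} hp := (_root_.mem_cells.1 (hS _ hp)).2
  card_eq := hcard.trans hT.card_eq
  lt_of_lt {x₁ y₁ x₂ y₂} h₁ h₂ hx hy := by
    by_contra! hx₂
    have hy₂ : y₂ ≤ n := Nat.lt_succ_iff.1 (_root_.mem_cells.1 (hS _ h₂)).1
    have htwo := two_le_smallCount hr h₁ h₂ hx hy hy₂ hx₂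
    have hone : smallCount r n T (n + 1 - y₁) (n + 1) (x₂ + 1) ≤ 1 :=
      (Nat.count_monotone _ (Nat.add_le_add_right hx₂ 1)).trans
        (hT.isLonePipe_zero hr (hy.le.trans hy₂)).smallCount_le
    simp only [smallCount, vertPipe_top] at htwo hone
    rw [h] at htwo
    omega

end IsStaircaseTree

end TreeProduct

section LatticePaths

/-- The abscissa of the last point of a lattice path in row `y`; above the path it is the abscissa
of the endpoint. -/
def lastAbscissa : List Bool → ℕ → ℕ
  | [], _ => 0
  | false :: l, y => lastAbscissa l y + 1
  | true :: _, 0 => 0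
  | true :: l, y + 1 => lastAbscissa l y

/-- The abscissa at which a lattice path arrives in row `y`: this encodes lattice paths by the
sequences of `IsStaircasePath`. -/
def profile (μ : List Bool) : ℕ → ℕ
  | 0 => 0
  | y + 1 => lastAbscissa μ y

variable {ν μ μ' : List Bool}

theorem lastAbscissa_mono (l : List Bool) : Monotone (lastAbscissa l) := by
  refine monotone_nat_of_le_succ ?_
  induction l with
  | nil => simp [lastAbscissa]
  | cons b l ih =>
    rintro (_ | y) <;> cases b <;> simp [lastAbscissa, ih]

theorem profile_mono (μ : List Bool) : Monotone (profile μ) := by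
  refine monotone_nat_of_le_succ ?_
  rintro (_ | y)
  · exact Nat.zero_le _
  · exact lastAbscissa_mono μ y.le_succ

theorem lastAbscissa_of_northSteps_le {y : ℕ} (h : northSteps μ ≤ y) :
    lastAbscissa μ y = eastSteps μ := by
  induction μ generalizing y with
  | nil => rfl
  | cons b l ih =>
    cases b <;> cases y <;> simp_all [lastAbscissa, northSteps, eastSteps]

theorem lastAbscissa_le (μ : List Bool) (y : ℕ) : lastAbscissa μ y ≤ eastSteps μ :=
  (lastAbscissa_mono μ (le_max_left y (northSteps μ))).trans
    (lastAbscissa_of_northSteps_le (le_max_right _ _)).le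

theorem lastAbscissa_append_of_lt {A : List Bool} (B : List Bool) {y : ℕ}
    (hy : y < northSteps A) : lastAbscissa (A ++ B) y = lastAbscissa A y := by
  induction A generalizing y with
  | nil => simp [northSteps] at hy
  | cons b A ih =>
    cases b <;> cases y <;> simp_all [lastAbscissa, northSteps]

theorem lastAbscissa_append_of_le {A : List Bool} (B : List Bool) {y : ℕ}
    (hy : northSteps A ≤ y) :
    lastAbscissa (A ++ B) y = eastSteps A + lastAbscissa B (y - northSteps A) := by
  induction A generalizing y with
  | nil => simp [northSteps, eastSteps]
  | cons b A ih =>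
    cases b <;> cases y <;> simp_all [lastAbscissa, northSteps, eastSteps, Nat.add_right_comm]

theorem heightAt_le_iff {x : ℕ} (hx : x ≤ eastSteps ν) (y : ℕ) :
    heightAt ν x ≤ y ↔ x ≤ lastAbscissa ν y := by
  induction ν generalizing x y with
  | nil => obtain rfl : x = 0 := Nat.le_zero.1 hx; simp [heightAt]
  | cons b l ih =>
    cases x <;> cases b <;> cases y <;> simp_all [heightAt, lastAbscissa, eastSteps]

theorem mem_APts_iff {x y : ℕ} : (x, y) ∈ APts ν ↔ y ≤ northSteps ν ∧ x ≤ lastAbscissa ν y := by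
  constructor
  · rintro ⟨hx, hh, hy⟩
    exact ⟨hy, (heightAt_le_iff hx y).1 hh⟩
  · rintro ⟨hy, hx⟩
    have hx' : x ≤ eastSteps ν := hx.trans (lastAbscissa_le ν y)
    exact ⟨hx', (heightAt_le_iff hx' y).2 hx, hy⟩

theorem horiz_eq {x y : ℕ} (h : (x, y) ∈ APts ν) : horiz ν (x, y) = lastAbscissa ν y - x := by
  rw [mem_APts_iff] at h
  have hset : {k | (x + k, y) ∈ APts ν} = Set.Iic (lastAbscissa ν y - x) := by
    ext k
    simp only [Set.mem_ofPred_eq, mem_APts_iff, Set.mem_Iic]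
    omega
  rw [horiz, hset, csSup_Iic]

theorem eastSteps_add_northSteps (μ : List Bool) : eastSteps μ + northSteps μ = μ.length :=
  (add_comm _ _).trans (List.count_true_add_count_false μ)

theorem pointAt_fst_add_snd {i : ℕ} (hi : i ≤ μ.length) :
    (pointAt μ i).1 + (pointAt μ i).2 = i :=
  (eastSteps_add_northSteps (μ.take i)).trans (List.length_take_of_le hi)

theorem pointAt_add {x y : ℕ} (h : (x, y) ∈ pathPointSet μ) : pointAt μ (x + y) = (x, y) := by
  obtain ⟨i, hi, hp⟩ := h
  have := pointAt_fst_add_snd hi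
  rw [hp] at this
  rw [this, hp]

theorem add_le_length {x y : ℕ} (h : (x, y) ∈ pathPointSet μ) : x + y ≤ μ.length := by
  obtain ⟨i, hi, hp⟩ := h
  have := pointAt_fst_add_snd hi
  rw [hp] at this
  exact this.trans_le hi

theorem bounds_pointAt (μ : List Bool) (i : ℕ) :
    (pointAt μ i).2 ≤ northSteps μ ∧ profile μ (pointAt μ i).2 ≤ (pointAt μ i).1 ∧
      (pointAt μ i).1 ≤ lastAbscissa μ (pointAt μ i).2 := by
  change northSteps (μ.take i) ≤ _ ∧ profile μ (northSteps (μ.take i)) ≤ eastSteps (μ.take i) ∧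
    eastSteps (μ.take i) ≤ lastAbscissa μ (northSteps (μ.take i))
  refine ⟨(List.take_sublist i μ).count_le _, ?_, ?_⟩
  · cases hy : northSteps (μ.take i) with
    | zero => exact Nat.zero_le _
    | succ y =>
      have := lastAbscissa_append_of_lt (μ.drop i) hy.ge
      rw [List.take_append_drop] at this
      exact this.trans_le (lastAbscissa_le _ _)
  · have := lastAbscissa_append_of_le (μ.drop i) (le_refl (northSteps (μ.take i)))
    rw [List.take_append_drop] at this
    exact (Nat.le_add_right _ _).trans this.ge

/- Two points of an antidiagonal cannot both satisfy the bounds, so the bounds single out the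
points of the path. -/
theorem mem_pathPointSet_iff {x y : ℕ} :
    (x, y) ∈ pathPointSet μ ↔ y ≤ northSteps μ ∧ profile μ y ≤ x ∧ x ≤ lastAbscissa μ y := by
  constructor
  · rintro ⟨i, -, hp⟩
    simpa only [hp] using bounds_pointAt μ i
  · rintro ⟨hy, hlo, hhi⟩
    have hi : x + y ≤ μ.length := by
      have := lastAbscissa_le μ y
      have := eastSteps_add_northSteps μ
      omega
    have hsum := pointAt_fst_add_snd hi
    have hbounds := bounds_pointAt μ (x + y)
    refine ⟨x + y, hi, ?_⟩
    generalize pointAt μ (x + y) = p at hsum hbounds ⊢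
    obtain ⟨x', y'⟩ := p
    obtain ⟨-, hlo', hhi'⟩ := hbounds
    dsimp only at hsum hlo' hhi'
    rcases lt_trichotomy y y' with h | h | h
    · have : lastAbscissa μ y ≤ profile μ y' := profile_mono μ (Nat.succ_le_of_lt h)
      omega
    · ext <;> dsimp only <;> omega
    · have : lastAbscissa μ y' ≤ profile μ y := profile_mono μ (Nat.succ_le_of_lt h)
      omega

theorem isNuPath_iff :
    IsNuPath ν μ ↔ eastSteps μ = eastSteps ν ∧ northSteps μ = northSteps ν ∧
      IsStaircasePath (lastAbscissa ν) (northSteps ν) (profile μ) := by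
  refine and_congr_right fun hE => and_congr_right fun hN => ⟨fun h => ?_, fun hZ i _ => ?_⟩
  · refine ⟨rfl, profile_mono μ, fun y => ?_, fun y hy => ?_⟩
    · rcases le_or_gt y (northSteps μ) with hy | hy
      · have hmem : (lastAbscissa μ y, y) ∈ pathPointSet μ :=
          mem_pathPointSet_iff.2 ⟨hy, profile_mono μ y.le_succ, le_rfl⟩
        have := h _ (add_le_length hmem)
        rw [pointAt_add hmem, mem_APts_iff] at this
        exact this.2
      · rw [profile, lastAbscissa_of_northSteps_le hy.le,
          lastAbscissa_of_northSteps_le (hN ▸ hy.le), hE]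
    · obtain ⟨y, rfl⟩ := Nat.exists_eq_add_one_of_ne_zero (Nat.ne_zero_of_lt hy)
      rw [profile, lastAbscissa_of_northSteps_le (hN ▸ Nat.le_of_lt_succ hy),
        lastAbscissa_of_northSteps_le le_rfl, hE]
  · obtain ⟨hy, -, hx⟩ := bounds_pointAt μ i
    exact mem_APts_iff.2 ⟨hN ▸ hy, hx.trans (hZ.succ_le _)⟩

theorem eq_of_lastAbscissa_eq (hN : northSteps μ = northSteps μ')
    (h : ∀ y, lastAbscissa μ y = lastAbscissa μ' y) : μ = μ' := by
  induction μ generalizing μ' with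
  | nil =>
    rcases μ' with _ | ⟨_ | _, l'⟩
    · rfl
    · simpa [lastAbscissa] using h 0
    · simp [northSteps] at hN
  | cons b l ih =>
    rcases μ' with _ | ⟨b', l'⟩
    · have := h 0
      cases b <;> simp_all [lastAbscissa, northSteps]
    · have h0 := h 0
      cases b <;> cases b' <;> simp only [lastAbscissa] at h0
      · rw [ih (μ' := l') (by simpa [northSteps] using hN)
          fun y => by simpa [lastAbscissa] using h y]
      · omega
      · omega
      · rw [ih (μ' := l') (by simpa [northSteps] using hN)
          fun y => by simpa [lastAbscissa] using h (y + 1)]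

theorem lastAbscissa_replicate_append (k : ℕ) (l : List Bool) (y : ℕ) :
    lastAbscissa (List.replicate k false ++ l) y = k + lastAbscissa l y := by
  rw [lastAbscissa_append_of_le] <;> simp [northSteps, eastSteps, List.count_replicate]

theorem exists_lastAbscissa_eq {n : ℕ} {X : ℕ → ℕ} (hX : Monotone X)
    (htop : ∀ y, n ≤ y → X y = X n) :
    ∃ μ, northSteps μ = n ∧ ∀ y, lastAbscissa μ y = X y := by
  induction n generalizing X with
  | zero =>
    refine ⟨List.replicate (X 0) false ++ [], ?_, fun y => ?_⟩
    · simp [northSteps, List.count_replicate]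
    · rw [lastAbscissa_replicate_append, htop y y.zero_le]
      rfl
  | succ n ih =>
    obtain ⟨μ, hN, hμ⟩ := ih (X := fun y => X (y + 1) - X 0)
      (fun a b hab => Nat.sub_le_sub_right (hX (Nat.add_le_add_right hab 1)) _)
      fun y hy => by rw [htop (y + 1) (Nat.add_le_add_right hy 1)]
    refine ⟨List.replicate (X 0) false ++ true :: μ, ?_, ?_⟩
    · rw [← hN]
      simp [northSteps, List.count_replicate]
    · rintro (_ | y) <;> rw [lastAbscissa_replicate_append, lastAbscissa]
      · rfl
      · rw [hμ, Nat.add_sub_cancel' (hX (y + 1).zero_le)]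

theorem bijOn_profile (ν : List Bool) : Set.BijOn profile {μ | IsNuPath ν μ}
    {Z | IsStaircasePath (lastAbscissa ν) (northSteps ν) Z} := by
  refine ⟨fun μ hμ => (isNuPath_iff.1 hμ).2.2, fun μ hμ μ' hμ' h => ?_, fun Z hZ => ?_⟩
  · exact eq_of_lastAbscissa_eq (hμ.2.1.trans hμ'.2.1.symm) fun y => congrFun h (y + 1)
  · obtain ⟨μ, hN, hμ⟩ := exists_lastAbscissa_eq (n := northSteps ν) (X := fun y => Z (y + 1))
      (fun a b hab => hZ.monotone (Nat.add_le_add_right hab 1)) fun y hy => by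
        rw [hZ.eq_top (y + 1) (Nat.lt_succ_of_le hy), hZ.eq_top _ (Nat.lt_succ_self _)]
    have hprofile : profile μ = Z := by
      funext y
      cases y with
      | zero => exact hZ.zero.symm
      | succ y => exact hμ y
    have hE : eastSteps μ = eastSteps ν := by
      rw [← lastAbscissa_of_northSteps_le le_rfl, hN, hμ, hZ.eq_top _ (Nat.lt_succ_self _),
        lastAbscissa_of_northSteps_le le_rfl]
    exact ⟨μ, isNuPath_iff.2 ⟨hE, hN, hprofile ▸ hZ⟩, hprofile⟩

/-- The lattice path `μ` with the east step before its point number `i` exchanged with the part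
between its points number `i` and `j`. -/
def rotatePath (μ : List Bool) (i j : ℕ) : List Bool :=
  μ.take (i - 1) ++ (μ.drop i).take (j - i) ++ [false] ++ μ.drop j

/-- The point number `i` of the lattice path `μ` lies between an east step and a north step. -/
structure IsValley (μ : List Bool) (i : ℕ) : Prop where
  pos : 0 < i
  east : μ.getD (i - 1) true = false
  north : μ.getD i false = true

/-- The point number `j` of the lattice path `μ` is the first one after its point number `i` at the
same horizontal distance from `ν`. -/
structure IsFirstReturn (ν μ : List Bool) (i j : ℕ) : Prop where
  lt : i < j
  le_length : j ≤ μ.length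
  horiz_eq : horiz ν (pointAt μ j) = horiz ν (pointAt μ i)
  horiz_ne : ∀ k, i < k → k < j → horiz ν (pointAt μ k) ≠ horiz ν (pointAt μ i)

theorem tamariCover_iff_exists : TamariCover ν μ μ' ↔ IsNuPath ν μ ∧ IsNuPath ν μ' ∧
    ∃ i j, IsValley μ i ∧ IsFirstReturn ν μ i j ∧ μ' = rotatePath μ i j := by
  refine and_congr_right fun _ => and_congr_right fun _ => exists₂_congr fun i j => ?_
  constructor
  · rintro ⟨h0, hij, hj, heast, hnorth, heq, hne, h⟩
    exact ⟨⟨h0, heast, hnorth⟩, ⟨hij, hj, heq, hne⟩, h⟩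
  · rintro ⟨⟨h0, heast, hnorth⟩, ⟨hij, hj, heq, hne⟩, h⟩
    exact ⟨h0, hij, hj, heast, hnorth, heq, hne, h⟩

theorem IsFirstReturn.unique {i j j' : ℕ} (h : IsFirstReturn ν μ i j)
    (h' : IsFirstReturn ν μ i j') : j = j' := by
  rcases lt_trichotomy j j' with hlt | heq | hlt
  · exact absurd h.horiz_eq (h'.horiz_ne j h.lt hlt)
  · exact heq
  · exact absurd h'.horiz_eq (h.horiz_ne j' h'.lt hlt)

theorem getD_eq_false_iff {i : ℕ} :
    μ.getD i true = false ↔ pointAt μ (i + 1) = pointAt μ i + (1, 0) := by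
  rcases lt_or_ge i μ.length with hi | hi
  · rw [pointAt, pointAt, List.take_succ_eq_append_getElem hi, List.getD_eq_getElem _ _ hi]
    cases μ[i] <;> simp
  · simp [pointAt, List.take_of_length_le hi, List.take_of_length_le (hi.trans i.le_succ), hi]

theorem getD_eq_true_iff {i : ℕ} :
    μ.getD i false = true ↔ pointAt μ (i + 1) = pointAt μ i + (0, 1) := by
  rcases lt_or_ge i μ.length with hi | hi
  · rw [pointAt, pointAt, List.take_succ_eq_append_getElem hi, List.getD_eq_getElem _ _ hi]
    cases μ[i] <;> simp
  · simp [pointAt, List.take_of_length_le hi, List.take_of_length_le (hi.trans i.le_succ), hi]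

theorem getD_pred_eq_false_iff_profile_lt {x y : ℕ} (h : (x, y) ∈ pathPointSet μ) :
    (0 < x + y ∧ μ.getD (x + y - 1) true = false) ↔ profile μ y < x := by
  have hp := pointAt_add h
  obtain ⟨hy, hlo, hhi⟩ := mem_pathPointSet_iff.1 h
  constructor
  · rintro ⟨hpos, heast⟩
    rw [getD_eq_false_iff, Nat.sub_add_cancel hpos, hp] at heast
    have hbounds := bounds_pointAt μ (x + y - 1)
    generalize pointAt μ (x + y - 1) = p at heast hbounds
    obtain ⟨x', y'⟩ := p
    simp only [Prod.mk_add_mk, Prod.mk.injEq, add_zero] at heast hbounds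
    rw [← heast.2] at hbounds
    omega
  · intro hlt
    obtain ⟨x, rfl⟩ := Nat.exists_eq_add_one_of_ne_zero (Nat.ne_zero_of_lt hlt)
    have hprev : (x, y) ∈ pathPointSet μ :=
      mem_pathPointSet_iff.2 ⟨hy, Nat.le_of_lt_succ hlt, x.le_succ.trans hhi⟩
    have hxy : x + 1 + y - 1 = x + y := by omega
    refine ⟨by omega, ?_⟩
    rw [getD_eq_false_iff, hxy, pointAt_add hprev, Nat.add_right_comm, hp]
    rfl

theorem getD_eq_true_iff_eq_lastAbscissa {x y : ℕ} (h : (x, y) ∈ pathPointSet μ) :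
    μ.getD (x + y) false = true ↔ x = lastAbscissa μ y ∧ y < northSteps μ := by
  have hp := pointAt_add h
  obtain ⟨-, -, hhi⟩ := mem_pathPointSet_iff.1 h
  rw [getD_eq_true_iff, hp]
  constructor
  · intro hnorth
    obtain ⟨hy', hlo', -⟩ := bounds_pointAt μ (x + y + 1)
    rw [hnorth] at hy' hlo'
    exact ⟨le_antisymm hhi hlo', hy'⟩
  · rintro ⟨rfl, hlt⟩
    have hnext : (lastAbscissa μ y, y + 1) ∈ pathPointSet μ :=
      mem_pathPointSet_iff.2 ⟨hlt, le_rfl, lastAbscissa_mono μ y.le_succ⟩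
    exact pointAt_add hnext

theorem isValley_iff {x y : ℕ} (h : (x, y) ∈ pathPointSet μ) :
    IsValley μ (x + y) ↔ profile μ y < x ∧ x = lastAbscissa μ y ∧ y < northSteps μ := by
  rw [← getD_pred_eq_false_iff_profile_lt h, ← getD_eq_true_iff_eq_lastAbscissa h, and_assoc]
  exact ⟨fun ⟨hpos, heast, hnorth⟩ => ⟨hpos, heast, hnorth⟩,
    fun ⟨hpos, heast, hnorth⟩ => ⟨hpos, heast, hnorth⟩⟩

theorem profile_exchange (A B C : List Bool) :
    profile (A ++ B ++ [false] ++ C) =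
      lowerOn (profile (A ++ [false] ++ B ++ C)) (northSteps A) (northSteps A + northSteps B) := by
  funext k
  rcases k with _ | y
  · simp [lowerOn, profile]
  simp only [lowerOn, profile, List.append_assoc, Nat.lt_succ_iff, Nat.succ_le_iff]
  rcases lt_or_ge y (northSteps A) with hA | hA
  · rw [lastAbscissa_append_of_lt _ hA, lastAbscissa_append_of_lt _ hA, if_neg (by omega)]
  rw [lastAbscissa_append_of_le _ hA, lastAbscissa_append_of_le _ hA]
  change _ = if _ then eastSteps A + (lastAbscissa (B ++ C) _ + 1) - 1
    else eastSteps A + (lastAbscissa (B ++ C) _ + 1)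
  rcases lt_or_ge (y - northSteps A) (northSteps B) with hB | hB
  · rw [lastAbscissa_append_of_lt _ hB, lastAbscissa_append_of_lt _ hB, if_pos (by omega)]
    rfl
  · rw [lastAbscissa_append_of_le _ hB, lastAbscissa_append_of_le _ hB, if_neg (by omega)]
    rfl

theorem IsValley.take_append {i : ℕ} (h : IsValley μ i) :
    μ.take (i - 1) ++ [false] = μ.take i := by
  obtain ⟨k, rfl⟩ := Nat.exists_eq_add_one_of_ne_zero h.pos.ne'
  have hk : k < μ.length := by
    by_contra hk
    have heast := h.east
    rw [Nat.add_sub_cancel, List.getD_eq_default _ _ (not_lt.1 hk)] at heast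
    exact Bool.false_ne_true heast.symm
  have heast := h.east
  rw [Nat.add_sub_cancel, List.getD_eq_getElem _ _ hk] at heast
  rw [Nat.add_sub_cancel, List.take_succ_eq_append_getElem hk, heast]

theorem IsValley.append_eq {i j : ℕ} (h : IsValley μ i) (hij : i ≤ j) :
    μ.take (i - 1) ++ [false] ++ (μ.drop i).take (j - i) ++ μ.drop j = μ := by
  have htake : μ.take i ++ (μ.drop i).take (j - i) = μ.take j := by
    rw [← List.take_add, Nat.add_sub_cancel' hij]
  rw [h.take_append, htake, List.take_append_drop]

theorem profile_rotatePath {i j : ℕ} (h : IsValley μ i) (hij : i ≤ j) :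
    profile (rotatePath μ i j) = lowerOn (profile μ) (pointAt μ i).2 (pointAt μ j).2 := by
  have hA : northSteps (μ.take (i - 1)) = (pointAt μ i).2 := by
    simp [northSteps, pointAt, ← h.take_append]
  have hB : northSteps (μ.take (i - 1)) + northSteps ((μ.drop i).take (j - i)) =
      (pointAt μ j).2 := by
    have hj : j = i + (j - i) := (Nat.add_sub_cancel' hij).symm
    rw [hA, pointAt, pointAt, hj, List.take_add, List.count_append, Nat.add_sub_cancel_left]
    simp [northSteps]
  rw [rotatePath, profile_exchange, hB, hA, h.append_eq hij]

theorem northSteps_rotatePath {i j : ℕ} (h : IsValley μ i) (hij : i ≤ j) :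
    northSteps (rotatePath μ i j) = northSteps μ := by
  conv_rhs => rw [← h.append_eq hij]
  simp only [rotatePath, northSteps, List.count_append]
  omega

theorem horiz_pointAt (hμ : IsNuPath ν μ) {x y : ℕ} (h : (x, y) ∈ pathPointSet μ) :
    horiz ν (pointAt μ (x + y)) = lastAbscissa ν y - x := by
  rw [pointAt_add h]
  obtain ⟨i, hi, hp⟩ := h
  exact horiz_eq (hp ▸ hμ.2.2 i hi)

theorem IsRotationSpan.bounds {r Z : ℕ → ℕ} {n a b : ℕ} (hr : Monotone r)
    (hZ : IsStaircasePath r n Z) (h : IsRotationSpan r n Z a b) :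
    Z b ≤ r b - slack r Z a ∧ r b - slack r Z a ≤ Z (b + 1) := by
  have hle := h.slack_le
  have hb := hZ.slack_add b
  obtain ⟨k, rfl⟩ := Nat.exists_eq_add_one_of_ne_zero (Nat.ne_zero_of_lt h.lt)
  have hk := hZ.slack_add k
  have hrk := hr k.le_succ
  have hslack : slack r Z a ≤ slack r Z k := by
    rcases (Nat.le_of_lt_succ h.lt).eq_or_lt with rfl | hak
    · exact le_rfl
    · exact (h.lt_slack k hak k.lt_succ_self).le
  dsimp only [Nat.succ_eq_add_one] at hrk
  omega

theorem mem_pathPointSet_of_isRotationSpan (hμ : IsNuPath ν μ) {a b : ℕ}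
    (h : IsRotationSpan (lastAbscissa ν) (northSteps ν) (profile μ) a b) :
    (lastAbscissa μ a, a) ∈ pathPointSet μ ∧
      (lastAbscissa ν b - slack (lastAbscissa ν) (profile μ) a, b) ∈ pathPointSet μ := by
  obtain ⟨-, hN, hZ⟩ := isNuPath_iff.1 hμ
  rw [mem_pathPointSet_iff, mem_pathPointSet_iff, hN]
  exact ⟨⟨h.lt.le.trans h.le, h.lt_succ.le, le_rfl⟩, h.le, h.bounds (lastAbscissa_mono ν) hZ⟩

theorem isFirstReturn_of_isRotationSpan (hμ : IsNuPath ν μ) {a b : ℕ}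
    (h : IsRotationSpan (lastAbscissa ν) (northSteps ν) (profile μ) a b) :
    IsFirstReturn ν μ (lastAbscissa μ a + a)
      (lastAbscissa ν b - slack (lastAbscissa ν) (profile μ) a + b) := by
  obtain ⟨-, -, hZ⟩ := isNuPath_iff.1 hμ
  obtain ⟨hpa, hpb⟩ := mem_pathPointSet_of_isRotationSpan hμ h
  obtain ⟨hlo, hhi⟩ := h.bounds (lastAbscissa_mono ν) hZ
  have hx : lastAbscissa μ a ≤ profile μ b := profile_mono μ h.lt
  have hab := h.lt
  have hr := lastAbscissa_mono ν hab.le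
  have hslack : slack (lastAbscissa ν) (profile μ) a + lastAbscissa μ a = lastAbscissa ν a :=
    hZ.slack_add a
  refine ⟨by omega, add_le_length hpb, ?_, fun k hk hkj => ?_⟩
  · rw [horiz_pointAt hμ hpa, horiz_pointAt hμ hpb]
    omega
  · have hkl : k ≤ μ.length := hkj.le.trans (add_le_length hpb)
    obtain ⟨⟨z, y⟩, hz⟩ : ∃ p, pointAt μ k = p := ⟨_, rfl⟩
    have hp : (z, y) ∈ pathPointSet μ := ⟨k, hkl, hz⟩
    obtain rfl : z + y = k := by simpa only [hz] using pointAt_fst_add_snd hkl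
    rw [horiz_pointAt hμ hpa, horiz_pointAt hμ hp]
    obtain ⟨-, hzlo, hzhi⟩ := mem_pathPointSet_iff.1 hp
    have hay : a < y := by
      by_contra hya
      have := lastAbscissa_mono μ (not_lt.1 hya)
      omega
    rcases lt_trichotomy y b with hyb | rfl | hyb
    · have := h.lt_slack y hay hyb
      simp only [slack, profile] at this
      omega
    · omega
    · have : profile μ (b + 1) ≤ profile μ y := profile_mono μ hyb
      omega

theorem tamariCover_iff (hμ : IsNuPath ν μ) (hμ' : IsNuPath ν μ') :
    TamariCover ν μ μ' ↔
      IsPathCover (lastAbscissa ν) (northSteps ν) (profile μ) (profile μ') := by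
  obtain ⟨-, hN, hZ⟩ := isNuPath_iff.1 hμ
  rw [tamariCover_iff_exists, and_iff_right hμ, and_iff_right hμ']
  constructor
  · rintro ⟨i, j, hi, hj, rfl⟩
    have hil : i ≤ μ.length := hj.lt.le.trans hj.le_length
    obtain ⟨⟨x, a⟩, hp⟩ : ∃ p, pointAt μ i = p := ⟨_, rfl⟩
    obtain rfl : x + a = i := by simpa only [hp] using pointAt_fst_add_snd hil
    obtain ⟨hlt, rfl, ha⟩ := (isValley_iff ⟨_, hil, hp⟩).1 hi
    obtain ⟨b, hspan⟩ := hZ.exists_isRotationSpan (hN ▸ ha) hlt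
    have hpb := (mem_pathPointSet_of_isRotationSpan hμ hspan).2
    obtain rfl := hj.unique (isFirstReturn_of_isRotationSpan hμ hspan)
    refine ⟨a, b, hspan, ?_⟩
    rw [profile_rotatePath hi hj.lt.le, hp, pointAt_add hpb]
  · rintro ⟨a, b, hspan, hprofile⟩
    obtain ⟨hpa, hpb⟩ := mem_pathPointSet_of_isRotationSpan hμ hspan
    have hj := isFirstReturn_of_isRotationSpan hμ hspan
    have hi := (isValley_iff hpa).2 ⟨hspan.lt_succ, rfl, hN ▸ hspan.lt.trans_le hspan.le⟩
    have hrotate : profile μ' = profile (rotatePath μ (lastAbscissa μ a + a)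
        (lastAbscissa ν b - slack (lastAbscissa ν) (profile μ) a + b)) := by
      rw [hprofile, profile_rotatePath hi hj.lt.le, pointAt_add hpa, pointAt_add hpb]
    exact ⟨_, _, hi, hj, eq_of_lastAbscissa_eq
      ((hμ'.2.1.trans hN.symm).trans (northSteps_rotatePath hi hj.lt.le).symm)
      fun y => congrFun hrotate (y + 1)⟩

end LatticePaths

section Facets

variable {ν : List Bool} {S T : Finset (ℕ × ℕ)}

theorem filter_heightAt_le_eq_range (ν : List Bool) (y : ℕ) :
    (List.range (eastSteps ν + 1)).filter (heightAt ν · ≤ y) =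
      List.range (lastAbscissa ν y + 1) := by
  obtain ⟨d, hd⟩ := Nat.exists_eq_add_of_le (lastAbscissa_le ν y)
  rw [hd, Nat.add_right_comm, List.range_add, List.filter_append, List.filter_eq_self.2,
    List.filter_eq_nil_iff.2, List.append_nil]
  · intro x hx
    obtain ⟨i, hi, rfl⟩ := List.mem_map.1 hx
    have := List.mem_range.1 hi
    rw [decide_eq_true_iff, heightAt_le_iff (by omega)]
    omega
  · intro x hx
    have := List.mem_range.1 hx
    rw [decide_eq_true_iff, heightAt_le_iff (by omega)]
    omega

theorem readingList_eq_cells (ν : List Bool) :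
    readingList ν = cells (lastAbscissa ν) (northSteps ν + 1) :=
  congrArg List.flatten <| List.map_congr_left fun y _ =>
    congrArg (List.map _) (filter_heightAt_le_eq_range ν y)

theorem Qword_eq (ν : List Bool) :
    Qword ν = (cells (lastAbscissa ν) (northSteps ν + 1)).map (cellSwap (northSteps ν)) :=
  congrArg (List.map _) (readingList_eq_cells ν)

theorem isStaircasePath_profile (ν : List Bool) :
    IsStaircasePath (lastAbscissa ν) (northSteps ν) (profile ν) := by
  refine ⟨rfl, profile_mono ν, fun y => le_rfl, fun y hy => ?_⟩
  obtain ⟨y, rfl⟩ := Nat.exists_eq_add_one_of_ne_zero (Nat.ne_zero_of_lt hy)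
  rw [profile, lastAbscissa_of_northSteps_le (Nat.le_of_lt_succ hy),
    lastAbscissa_of_northSteps_le le_rfl]

theorem freeColumn_profile_of_pos (ν : List Bool) (y : ℕ) {H : ℕ} (hH : 0 < H) :
    freeColumn (lastAbscissa ν) (profile ν) y H = H + profile ν y := by
  cases y with
  | zero => rfl
  | succ y => exact if_pos (Nat.lt_add_of_pos_left hH)

theorem mem_treeOf_profile_iff {x y : ℕ} :
    (x, y) ∈ treeOf (lastAbscissa ν) (northSteps ν) (profile ν) ↔
      y ≤ northSteps ν ∧ x ≤ lastAbscissa ν y ∧ (x = 0 ∨ profile ν y < x) := by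
  have hZ := isStaircasePath_profile ν
  have hle : profile ν y ≤ lastAbscissa ν y := hZ.le (lastAbscissa_mono ν) y
  have hsucc : profile ν (y + 1) = lastAbscissa ν y := rfl
  rw [hZ.mem_treeOf (lastAbscissa_mono ν)]
  refine and_congr_right fun _ => ⟨?_, ?_⟩
  · rintro ⟨_ | H, -, hH, rfl⟩
    · exact ⟨(hZ.freeColumn_zero y).trans_le (Nat.zero_le _), Or.inl (hZ.freeColumn_zero y)⟩
    · rw [freeColumn_profile_of_pos ν y H.succ_pos]
      exact ⟨hH, Or.inr (Nat.lt_add_of_pos_left H.succ_pos)⟩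
  · rintro ⟨hx, rfl | hlt⟩
    · exact ⟨0, by omega, by omega, hZ.freeColumn_zero y⟩
    · refine ⟨x - profile ν y, by omega, by omega, ?_⟩
      rw [freeColumn_profile_of_pos ν y (by omega), Nat.sub_add_cancel hlt.le]

theorem exists_eastStep_iff_profile_lt {x y : ℕ} (h : (x, y) ∈ pathPointSet ν) :
    (∃ i < ν.length, ν.getD i true = false ∧ (x, y) = pointAt ν (i + 1)) ↔ profile ν y < x := by
  rw [← getD_pred_eq_false_iff_profile_lt h]
  constructor
  · rintro ⟨i, hi, heast, hp⟩
    have hsum : x + y = i + 1 := by simpa only [← hp] using pointAt_fst_add_snd (μ := ν) hi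
    rw [hsum]
    exact ⟨i.succ_pos, heast⟩
  · rintro ⟨hpos, heast⟩
    have := add_le_length h
    refine ⟨x + y - 1, by omega, heast, ?_⟩
    rw [Nat.sub_add_cancel hpos, pointAt_add h]

theorem mem_TminSet_iff {x y : ℕ} :
    (x, y) ∈ TminSet ν ↔ y ≤ northSteps ν ∧ x ≤ lastAbscissa ν y ∧ (x = 0 ∨ profile ν y < x) := by
  change (x, y) ∈ APts ν ∧ (x = 0 ∨ _) ↔ _
  rw [mem_APts_iff, and_assoc]
  refine and_congr_right fun hy => and_congr_right fun hx => or_congr_right ?_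
  constructor
  · rintro ⟨i, hi, h⟩
    exact (exists_eastStep_iff_profile_lt ⟨i + 1, hi, h.2.symm⟩).1 ⟨i, hi, h⟩
  · intro hlt
    exact (exists_eastStep_iff_profile_lt (mem_pathPointSet_iff.2 ⟨hy, hlt.le, hx⟩)).2 hlt

theorem TminSet_eq (ν : List Bool) :
    TminSet ν = treeOf (lastAbscissa ν) (northSteps ν) (profile ν) :=
  Set.ext fun _ => mem_TminSet_iff.trans mem_treeOf_profile_iff.symm

theorem piNu_eq (ν : List Bool) :
    piNu ν = crossingProd (northSteps ν) (treeOf (lastAbscissa ν) (northSteps ν) (profile ν))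
      (cells (lastAbscissa ν) (northSteps ν + 1)) := by
  rw [piNu, prodOver, readingList_eq_cells, TminSet_eq]
  refine congrArg (fun L => (L.map (labelPerm ν)).prod) (List.filter_congr ?_)
  rintro ⟨x, y⟩ hp
  have hA : (x, y) ∈ APts ν :=
    mem_APts_iff.2 ⟨Nat.lt_succ_iff.1 (mem_cells.1 hp).1, (mem_cells.1 hp).2⟩
  simp [hA]

theorem isFacet_positions_iff (hS : ∀ p ∈ S, p ∈ cells (lastAbscissa ν) (northSteps ν + 1)) :
    IsFacet (Qword ν) (piNu ν) (positions (cells (lastAbscissa ν) (northSteps ν + 1)) S) ↔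
      IsStaircaseTree (lastAbscissa ν) (northSteps ν) S := by
  have hr := lastAbscissa_mono ν
  have hT := (isStaircasePath_profile ν).isStaircaseTree_treeOf hr
  have hnodup := nodup_cells (lastAbscissa ν) (northSteps ν + 1)
  have hcardT := length_filter_notMem_add_card hnodup hT.mem_cells
  have hcard := length_filter_notMem_add_card hnodup hS
  have hsub := positions_subset_range hS
  have hcompl : (Finset.range (cells (lastAbscissa ν) (northSteps ν + 1)).length \
      positions (cells (lastAbscissa ν) (northSteps ν + 1)) S).card =
      ((cells (lastAbscissa ν) (northSteps ν + 1)).filter (· ∉ S)).length := by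
    rw [Finset.card_sdiff_of_subset hsub, Finset.card_range, card_positions hS, ← hcard,
      Nat.add_sub_cancel]
  rw [IsFacet, Qword_eq, prodAt_compl_positions hnodup, piNu_eq, hT.lenInv_crossingProd hr,
    List.length_map, hcompl, ← hT.length_crossings, and_iff_right hsub]
  constructor
  · rintro ⟨hprod, hlen⟩
    exact hT.of_crossingProd_eq hr hS (by omega) hprod
  · intro h
    exact ⟨h.crossingProd_eq hr hT, h.length_crossings.trans hT.length_crossings.symm⟩

theorem bijOn_positions_facets (ν : List Bool) :
    Set.BijOn (positions (cells (lastAbscissa ν) (northSteps ν + 1)))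
      {T | IsStaircaseTree (lastAbscissa ν) (northSteps ν) T}
      {I | IsFacet (Qword ν) (piNu ν) I} := by
  have hbij := bijOn_positions (nodup_cells (lastAbscissa ν) (northSteps ν + 1))
  refine ⟨fun T hT => (isFacet_positions_iff hT.mem_cells).2 hT,
    hbij.injOn.mono fun T hT => hT.mem_cells, fun I hI => ?_⟩
  have hsub := hI.1
  rw [Qword_eq, List.length_map] at hsub
  obtain ⟨T, hT, rfl⟩ := hbij.surjOn hsub
  exact ⟨T, (isFacet_positions_iff hT).1 hI, rfl⟩

theorem incFlip_positions_iff (hS : IsStaircaseTree (lastAbscissa ν) (northSteps ν) S)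
    (hT : IsStaircaseTree (lastAbscissa ν) (northSteps ν) T) :
    IncFlip (Qword ν) (piNu ν) (positions (cells (lastAbscissa ν) (northSteps ν + 1)) S)
      (positions (cells (lastAbscissa ν) (northSteps ν + 1)) T) ↔ IsUpFlip S T := by
  have hSL := hS.mem_cells
  have hTL := hT.mem_cells
  rw [IncFlip, and_iff_right ((isFacet_positions_iff hSL).2 hS),
    and_iff_right ((isFacet_positions_iff hTL).2 hT)]
  constructor
  · rintro ⟨i, hi, j, hj, hij, herase⟩
    obtain ⟨p, hp, rfl⟩ := Finset.mem_image.1 hi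
    obtain ⟨q, hq, rfl⟩ := Finset.mem_image.1 hj
    rw [← positions_erase hSL hp, ← positions_erase hTL hq] at herase
    have herase' := (bijOn_positions (nodup_cells _ _)).injOn
      (fun x hx => hSL x (Finset.mem_of_mem_erase hx))
      (fun x hx => hTL x (Finset.mem_of_mem_erase hx)) herase
    have hpq : p ≠ q := by
      rintro rfl
      exact hij.false
    have hne := snd_ne_of_erase_eq_erase (lastAbscissa_mono ν) hS hT hp hq hpq herase'
    have hle := rel_of_idxOf_lt (pairwise_cells _ _) (hSL p hp) (hTL q hq) hij
    exact ⟨p, hp, q, hq, by omega, herase'⟩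
  · rintro ⟨p, hp, q, hq, hlt, herase⟩
    refine ⟨_, (idxOf_mem_positions_iff hSL).2 hp, _, (idxOf_mem_positions_iff hTL).2 hq, ?_, ?_⟩
    · exact idxOf_lt_idxOf_of_not_rel (pairwise_cells _ _) (hSL p hp) (hTL q hq)
        (ne_of_apply_ne Prod.snd hlt.ne) (by omega)
    · rw [← positions_erase hSL hp, ← positions_erase hTL hq, herase]

end Facets

/-- The facet of the subword complex that corresponds to the `ν`-path `μ`: the positions at which
the points of the `ν`-tree of `μ` are read. -/
def facetOfPath (ν μ : List Bool) : Finset ℕ :=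
  positions (cells (lastAbscissa ν) (northSteps ν + 1))
    (treeOf (lastAbscissa ν) (northSteps ν) (profile μ))

theorem bijOn_facetOfPath (ν : List Bool) :
    Set.BijOn (facetOfPath ν) {μ | IsNuPath ν μ} {I | IsFacet (Qword ν) (piNu ν) I} :=
  (bijOn_positions_facets ν).comp
    ((bijOn_treeOf (lastAbscissa_mono ν) (northSteps ν)).comp (bijOn_profile ν))

theorem incFlip_facetOfPath_iff {ν μ μ' : List Bool} (hμ : IsNuPath ν μ) (hμ' : IsNuPath ν μ') :
    IncFlip (Qword ν) (piNu ν) (facetOfPath ν μ) (facetOfPath ν μ') ↔ TamariCover ν μ μ' := by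
  have hr := lastAbscissa_mono ν
  have hZ := (isNuPath_iff.1 hμ).2.2
  have hZ' := (isNuPath_iff.1 hμ').2.2
  rw [tamariCover_iff hμ hμ', hZ.isPathCover_iff hr hZ', facetOfPath, facetOfPath,
    incFlip_positions_iff (hZ.isStaircaseTree_treeOf hr) (hZ'.isStaircaseTree_treeOf hr)]

theorem tamari_iso_increasing_flip_poset (ν : List Bool) :
    ∃ φ : List Bool → Finset ℕ,
      Set.BijOn φ {μ | IsNuPath ν μ} {I | IsFacet (Qword ν) (piNu ν) I} ∧
      ∀ μ μ', IsNuPath ν μ → IsNuPath ν μ' →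
        (TamariLE ν μ μ' ↔ FlipLE (Qword ν) (piNu ν) (φ μ) (φ μ')) := by
  refine ⟨facetOfPath ν, bijOn_facetOfPath ν, fun μ μ' hμ hμ' => ?_⟩
  exact reflTransGen_iff_of_bijOn (bijOn_facetOfPath ν)
    (fun _ _ hcover => ⟨hcover.1, hcover.2.1⟩) (fun _ _ hflip => ⟨hflip.1, hflip.2.1⟩)
    (fun _ hκ _ hκ' => incFlip_facetOfPath_iff hκ hκ') hμ hμ'
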